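/- Every 1-tough graph G on n vertices with minimum degree δ ≥ (n − 2)/3, in which some longest cycle is not a dominating cycle, satisfies n ≤ 3δ + 2 and contains a longest cycle C with 2δ + 2 ≤ |C| ≤ 3δ − p + 1, where p ≥ 1 is the length of a longest path in G \ C. -/

import Mathlib

/-!
The substantial claim is that a longest cycle has at least `2δ + 2` vertices as soon as it misses
some edge; it then holds for the given cycle, and the upper bound merely says that the cycle and a
longest path outside it are disjoint. This is the part of the Bauer–Schmeichel theorem that is
needed here, and it is proved below from scratch.

Suppose that all cycles have at most `c ≤ 2d + 1` vertices, where `d = δ`. A 1-tough graph has no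
cut vertex, so going round a longest cycle and on to an edge off that cycle gives a path with at
least `c + 2` vertices. Let `N` be the order of a longest path. These assumptions are collected in
`Hyp` and refuted in `Hyp.false`.

The first step (`Hyp.no_config`) shows that no cycle `C` and path `Q` disjoint from it, with
`|C| + |Q| = N`, have two edges from the ends of `Q` to distinct vertices of `C`. Take such a pair
with `Q` shortest. Opening `C` shows that the ends of `Q` have all their neighbours on `C ∪ Q`, and
minimality of `Q` forces at least `|Q|` vertices of `C` between any attachment of one end and the
next attachment of the other. Counting against `|C| ≤ 2d + 1` makes everything tight
(`Config.tight`): both ends of `Q` have the same neighbours `S` on `C` and are adjacent to all of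
`Q`, and the arcs of `C` between consecutive attachments have `|Q|` vertices, with at most one
exception. Such arcs are interchangeable with `Q`, so after deleting `S` they and `Q` lie in
different components, which are too many for toughness.

Hence the neighbourhoods of the two ends of a longest path `q` do not cross (`Hyp.noncross`). They
even meet in one vertex (`Hyp.pinch`): otherwise the section between them is bypassed by two
disjoint paths (`Hyp.vine`), which together with two paths covering the closed neighbourhoods of
the two ends (`Hyp.cover`) form a cycle with at least `2d + 2` vertices.

Let `z = q s` be this common vertex and `A` the section of `q` up to `z`. As `z` is no cut vertex,
a path from some `y ∈ A` leads to the other side of `z`, and continues to `z` through all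
neighbours of the last vertex of `q`. The resulting path `E` has at least `d + 2` vertices. Every
path through `A` that ends in `z` starts in a vertex whose neighbours all lie in `A`
(`Hyp.cov_pinch`), so it does not start in `y`, and the cycles through `E` are so short that its
first vertex is adjacent to a prescribed set of vertices (`Pinched.exact`). Rotations then
determine the adjacencies inside `A` (`Pinched.shape`): deleting `y` and `z` splits `A` into two
parts without further neighbours, besides the other side of `z`. So two vertices leave at least
three components, contradicting toughness.
-/

open SimpleGraph Finset

namespace Paper

variable {V : Type*}

/-- Number of connected components of `G` after deleting the vertex set `S`. -/
noncomputable def compCount (G : SimpleGraph V) (S : Set V) : ℕ :=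
  Nat.card ((G.induce Sᶜ).ConnectedComponent)

/-- `G` is 1-tough: every cutset `S` satisfies `|S| ≥ s(G \ S)`. -/
def OneTough [Fintype V] (G : SimpleGraph V) : Prop :=
  ∀ S : Finset V, 1 < compCount G ↑S → compCount G ↑S ≤ S.card

/-- The toughness of `G` equals 1. -/
def ToughnessEqOne [Fintype V] (G : SimpleGraph V) : Prop :=
  OneTough G ∧ ∃ S : Finset V, 1 < compCount G ↑S ∧ compCount G ↑S = S.card

/-- The vertex connectivity of `G` equals 2. -/
def ConnectivityEqTwo [Fintype V] (G : SimpleGraph V) : Prop :=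
  (∀ S : Finset V, S.card ≤ 1 → (G.induce (↑S : Set V)ᶜ).Connected) ∧
  ∃ S : Finset V, S.card = 2 ∧ ¬ (G.induce (↑S : Set V)ᶜ).Connected

/-- `G` is 3-connected: it stays connected after removing any 2 vertices. -/
def ThreeConnected [Fintype V] (G : SimpleGraph V) : Prop :=
  ∀ S : Finset V, S.card ≤ 2 → (G.induce (↑S : Set V)ᶜ).Connected

/-- `c` is a longest cycle of `G`. -/
def IsLongestCycle {G : SimpleGraph V} {u : V} (c : G.Walk u u) : Prop :=
  c.IsCycle ∧ ∀ (v : V) (d : G.Walk v v), d.IsCycle → d.length ≤ c.length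

/-- The cycle `c` is dominating: `G \ V(c)` is edgeless. -/
def IsDominating {G : SimpleGraph V} {u : V} (c : G.Walk u u) : Prop :=
  ∀ a b : V, G.Adj a b → a ∈ c.support ∨ b ∈ c.support

/-- The walk `p` avoids all vertices of the cycle `c`. -/
def AvoidsCycle {G : SimpleGraph V} {u x y : V} (c : G.Walk u u) (p : G.Walk x y) : Prop :=
  ∀ v ∈ p.support, v ∉ c.support

/-- `p` is a longest path of `G \ V(c)`. -/
def IsLongestPathOutside {G : SimpleGraph V} {u x y : V} (c : G.Walk u u)
    (p : G.Walk x y) : Prop :=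
  p.IsPath ∧ AvoidsCycle c p ∧
  ∀ (a b : V) (q : G.Walk a b), q.IsPath → AvoidsCycle c q → q.length ≤ p.length

/-- `N_C(x)`: the neighbors of `x` lying on the cycle `c`. -/
def NC [Fintype V] [DecidableEq V] (G : SimpleGraph V) [DecidableRel G.Adj]
    {u : V} (c : G.Walk u u) (x : V) : Finset V :=
  (G.neighborFinset x).filter (fun v => v ∈ c.support)

/-- The interior vertices of a segment (the walk minus its endpoints). -/
def interior {G : SimpleGraph V} {a b : V} (I : G.Walk a b) : Set V :=
  {v | v ∈ I.support ∧ v ≠ a ∧ v ≠ b}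

/-- `I` is an elementary segment of the cycle `c` created by the attachment set `A`:
an arc of `c` between consecutive vertices of `A`. -/
def IsSegment {G : SimpleGraph V} {u : V} (c : G.Walk u u)
    (A : Finset V) {a b : V} (I : G.Walk a b) : Prop :=
  I.IsPath ∧ 1 ≤ I.length ∧ a ∈ A ∧ b ∈ A ∧
  (∀ v ∈ I.support, v ∈ c.support) ∧
  (∀ e ∈ I.edges, e ∈ c.edges) ∧
  ∀ v ∈ interior I, v ∉ A

/-- `L` is an intermediate path between the elementary segments `Ia` and `Ib`:
it joins interior vertices of `Ia` and `Ib` and is internally disjoint from `c ∪ P`. -/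
def IsIntermediatePath {G : SimpleGraph V} {u x y : V} (c : G.Walk u u) (P : G.Walk x y)
    {a b a' b' z w : V} (Ia : G.Walk a b) (Ib : G.Walk a' b') (L : G.Walk z w) : Prop :=
  L.IsPath ∧ 1 ≤ L.length ∧ z ∈ interior Ia ∧ w ∈ interior Ib ∧
  ∀ v ∈ L.support, (v ∈ c.support ∨ v ∈ P.support) → v = z ∨ v = w

/-- Membership in the exceptional class `𝔉₁`. -/
def InF1 [Fintype V] (H : SimpleGraph V) [DecidableRel H.Adj] (d : ℕ) : Prop :=
  ∃ (x y₁ y₂ y₃ : V) (A : Fin 3 → Set V),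
    (∀ i j, i ≠ j → A i ∩ A j = {x}) ∧
    (⋃ i, A i) = Set.univ ∧
    y₁ ∈ A 0 ∧ y₂ ∈ A 1 ∧ y₃ ∈ A 2 ∧ y₁ ≠ x ∧ y₂ ≠ x ∧ y₃ ≠ x ∧
    H.Adj y₁ y₂ ∧ H.Adj y₂ y₃ ∧ H.Adj y₁ y₃ ∧
    (∀ a b : V, H.Adj a b → (∃ i, a ∈ A i ∧ b ∈ A i) ∨
      s(a, b) ∈ ({s(y₁, y₂), s(y₂, y₃), s(y₁, y₃)} : Set (Sym2 V))) ∧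
    (∀ i, (H.induce (A i)).Connected) ∧
    Nat.card (A 0) = d + 1 ∧ Nat.card (A 1) = d + 1 ∧
    d + 1 ≤ Nat.card (A 2) ∧ Nat.card (A 2) ≤ d + 2 ∧
    H.minDegree = d ∧ 3 ≤ d

/-- Membership in the exceptional class `𝔉₂`. -/
def InF2 [Fintype V] (H : SimpleGraph V) [DecidableRel H.Adj] : Prop :=
  ∃ (x z y₁ y₂ y₃ : V) (A : Fin 3 → Set V),
    (∀ i j, i ≠ j → A i ∩ A j = {x}) ∧
    ((⋃ i, A i) ∪ {z}) = Set.univ ∧ z ∉ ⋃ i, A i ∧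
    y₁ ∈ A 0 ∧ y₂ ∈ A 1 ∧ y₃ ∈ A 2 ∧ y₁ ≠ x ∧ y₂ ≠ x ∧ y₃ ≠ x ∧
    H.Adj z y₁ ∧ H.Adj z y₂ ∧ H.Adj z y₃ ∧ H.Adj y₁ y₂ ∧
    (∀ a b : V, H.Adj a b → (∃ i, a ∈ A i ∧ b ∈ A i) ∨
      s(a, b) ∈ ({s(z, y₁), s(z, y₂), s(z, y₃), s(y₁, y₂), s(y₁, y₃), s(y₂, y₃),
        s(z, x)} : Set (Sym2 V))) ∧
    (∀ i, Nat.card (A i) = 4) ∧ H.minDegree = 3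

/-- Membership in the exceptional class `𝔉₃`. -/
def InF3 [Fintype V] (H : SimpleGraph V) [DecidableRel H.Adj] : Prop :=
  ∃ (x z y₁ y₂ y₃ : V) (A : Fin 3 → Set V),
    (∀ i j, i ≠ j → A i ∩ A j = {x}) ∧
    ((⋃ i, A i) ∪ {z}) = Set.univ ∧ z ∉ ⋃ i, A i ∧
    y₁ ∈ A 0 ∧ y₂ ∈ A 1 ∧ y₃ ∈ A 2 ∧ y₁ ≠ x ∧ y₂ ≠ x ∧ y₃ ≠ x ∧
    H.Adj z y₁ ∧ H.Adj z y₂ ∧ H.Adj z y₃ ∧ H.Adj z x ∧ H.Adj y₁ y₂ ∧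
    (∀ a b : V, H.Adj a b → (∃ i, a ∈ A i ∧ b ∈ A i) ∨
      s(a, b) ∈ ({s(z, y₁), s(z, y₂), s(z, y₃), s(z, x), s(y₁, y₂), s(y₁, y₃),
        s(y₂, y₃)} : Set (Sym2 V))) ∧
    (∀ i, Nat.card (A i) = 5) ∧ H.minDegree = 4

/-- Membership in the exceptional class `𝔉₄`. -/
def InF4 [Fintype V] (H : SimpleGraph V) [DecidableRel H.Adj] : Prop :=
  ∃ (x y : V) (z : Fin 4 → V) (A : Fin 4 → Set V),
    x ≠ y ∧
    (∀ i j, i ≠ j → A i ∩ A j = {x, y}) ∧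
    (⋃ i, A i) = Set.univ ∧
    (∀ i, z i ∈ A i ∧ z i ≠ x ∧ z i ≠ y) ∧
    H.Adj (z 0) (z 1) ∧ H.Adj (z 1) (z 2) ∧ H.Adj (z 0) (z 2) ∧
    (∀ a b : V, H.Adj a b → (∃ i, a ∈ A i ∧ b ∈ A i) ∨
      s(a, b) ∈ ({s(z 0, z 1), s(z 1, z 2), s(z 0, z 2)} : Set (Sym2 V))) ∧
    (∀ i, Nat.card (A i) = 5) ∧ H.minDegree = 4

/-! ### Paths recorded by their vertex sets -/

/-- `PS G u v F`: there is a path of `G` from `u` to `v` whose vertex set is exactly `F`.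
Only the ends and the vertex set are recorded, since the gluing arguments below need nothing
else. -/
inductive PS [DecidableEq V] (G : SimpleGraph V) : V → V → Finset V → Prop
  | single (u : V) : PS G u u {u}
  | cons {u v w : V} {F : Finset V} : G.Adj u v → PS G v w F → u ∉ F → PS G u w (insert u F)

section Paths

variable [DecidableEq V] {G : SimpleGraph V}

theorem PS.left_mem {u v : V} {F : Finset V} (h : PS G u v F) : u ∈ F := by
  cases h <;> simp

theorem PS.right_mem {u v : V} {F : Finset V} (h : PS G u v F) : v ∈ F := by
  induction h with
  | single u => simp
  | cons _ _ _ ih => exact mem_insert_of_mem ih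

theorem PS.card_pos {u v : V} {F : Finset V} (h : PS G u v F) : 1 ≤ F.card :=
  Finset.card_pos.2 ⟨u, h.left_mem⟩

/-- Two disjoint paths joined by an edge. -/
theorem PS.join_edge {u v w x : V} {F F' : Finset V} (h : PS G u v F) (hvw : G.Adj v w)
    (h' : PS G w x F') (hd : ∀ z ∈ F, z ∉ F') : PS G u x (F ∪ F') := by
  induction h with
  | single u =>
    rw [← insert_eq]
    exact PS.cons hvw h' (hd u (by simp))
  | @cons u v' v F hadj hp hu ih =>
    rw [insert_union]
    refine PS.cons hadj (ih hvw fun z hz => hd z (mem_insert_of_mem hz)) ?_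
    rw [mem_union, not_or]
    exact ⟨hu, hd u (by simp)⟩

theorem PS.symm {u v : V} {F : Finset V} (h : PS G u v F) : PS G v u F := by
  induction h with
  | single u => exact PS.single u
  | @cons u v' v F hadj hp hu ih =>
    rw [insert_eq, union_comm]
    refine PS.join_edge ih hadj.symm (PS.single u) ?_
    intro z hz hz'
    rw [mem_singleton] at hz'
    exact hu (hz' ▸ hz)

theorem PS.tail {u v : V} {F : Finset V} (h : PS G u v F) (hne : u ≠ v) :
    ∃ w, G.Adj u w ∧ PS G w v (F.erase u) := by
  cases h with
  | single u => exact absurd rfl hne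
  | @cons _ v' _ F hadj hp hu => exact ⟨v', hadj, by rwa [erase_insert hu]⟩

theorem PS.eq_singleton {u v : V} {F : Finset V} (h : PS G u v F) (e : u = v) : F = {u} := by
  cases h with
  | single _ => rfl
  | cons _ hp hu => exact absurd (e ▸ hp.right_mem) hu

theorem PS.congr {u v : V} {F F' : Finset V} (h : PS G u v F) (e : ∀ z, z ∈ F ↔ z ∈ F') :
    PS G u v F' := by
  have : F = F' := Finset.ext e
  rwa [← this]

/-- Two paths glued at a common end. -/
theorem PS.join {u v w : V} {F F' : Finset V} (h : PS G u v F) (h' : PS G v w F')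
    (hd : ∀ z ∈ F, z ∈ F' → z = v) : PS G u w (F ∪ F') := by
  by_cases hvw : v = w
  · subst hvw
    cases h' with
    | single _ =>
      exact h.congr fun z => by
        have := h.right_mem
        simp only [mem_union, mem_singleton]
        constructor
        · exact Or.inl
        · rintro (h | rfl) <;> assumption
    | cons _ hp hu => exact absurd hp.right_mem hu
  · obtain ⟨x, hx, hp⟩ := h'.tail hvw
    refine (h.join_edge hx hp ?_).congr ?_
    · intro z hz hz'
      rw [mem_erase] at hz'
      exact hz'.1 (hd z hz hz'.2)
    · intro z
      have := h.right_mem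
      simp only [mem_union, mem_erase]
      constructor
      · tauto
      · rintro (h1 | h1)
        · exact Or.inl h1
        · by_cases hz : z = v
          · subst hz; exact Or.inl this
          · exact Or.inr ⟨hz, h1⟩

theorem PS.toWalk {u v : V} {F : Finset V} (h : PS G u v F) :
    ∃ p : G.Walk u v, p.IsPath ∧ p.length + 1 = F.card ∧ ∀ z, z ∈ p.support ↔ z ∈ F := by
  induction h with
  | single u => exact ⟨Walk.nil, by simp, by simp, by simp⟩
  | @cons u v' v F hadj hp hu ih =>
    obtain ⟨p, hp1, hp2, hp3⟩ := ih
    refine ⟨Walk.cons hadj p, ?_, ?_, ?_⟩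
    · rw [Walk.cons_isPath_iff]
      exact ⟨hp1, fun h => hu ((hp3 u).1 h)⟩
    · rw [Walk.length_cons, card_insert_of_notMem hu, hp2]
    · intro z
      rw [Walk.support_cons, List.mem_cons, mem_insert, hp3]

theorem PS.of_walk {u v : V} (p : G.Walk u v) (hp : p.IsPath) :
    PS G u v p.support.toFinset := by
  induction p with
  | nil => exact (PS.single _).congr (by simp)
  | cons h p ih =>
    rw [Walk.cons_isPath_iff] at hp
    rw [Walk.support_cons, List.toFinset_cons]
    exact PS.cons h (ih hp.1) (by simpa using hp.2)

theorem PS.close {u v : V} {F : Finset V} (h : PS G u v F) (hadj : G.Adj v u)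
    (h3 : 3 ≤ F.card) : ∃ d : G.Walk v v, d.IsCycle ∧ d.length = F.card := by
  obtain ⟨p, hp1, hp2, hp3⟩ := h.toWalk
  refine ⟨Walk.cons hadj p, ?_, by rw [Walk.length_cons, hp2]⟩
  rw [Walk.cons_isCycle_iff]
  refine ⟨hp1, fun he => ?_⟩
  -- in a path the only edge joining the two ends is the path of length one
  cases p with
  | nil => simp at hp2; omega
  | @cons _ w _ hw q =>
    rw [Walk.cons_isPath_iff] at hp1
    rw [Walk.edges_cons, List.mem_cons] at he
    rcases he with he | he
    · have hvw : v = w := by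
        rw [Sym2.eq_iff] at he
        rcases he with he | he
        · exact absurd he.1 hadj.ne
        · exact he.1
      subst hvw
      have hq : q.length = 0 := by
        exact Walk.length_eq_zero_iff.2 (Walk.isPath_iff_nil.1 hp1.1)
      rw [Walk.length_cons] at hp2
      omega
    · exact hp1.2 (Walk.snd_mem_support_of_mem_edges q he)

theorem PS.of_fun (r : ℕ → V) (i : ℕ) : ∀ j, i ≤ j →
    (∀ k, i ≤ k → k < j → G.Adj (r k) (r (k + 1))) →
    (∀ k l, i ≤ k → k ≤ j → i ≤ l → l ≤ j → r k = r l → k = l) →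
    PS G (r i) (r j) ((Finset.Icc i j).image r) := by
  intro j hij
  induction j, hij using Nat.le_induction with
  | base => intro _ _; simpa using PS.single (r i)
  | succ j hij ih =>
    intro hadj hinj
    have h1 := ih (fun k hk hk' => hadj k hk (by omega))
      (fun k l a b c d => hinj k l a (by omega) c (by omega))
    refine (h1.join_edge (hadj j hij (by omega)) (PS.single (r (j + 1))) ?_).congr ?_
    · intro z hz hz'
      rw [mem_singleton] at hz'
      rw [mem_image] at hz
      obtain ⟨k, hk, rfl⟩ := hz
      rw [Finset.mem_Icc] at hk
      have := hinj k (j + 1) hk.1 (by omega) (by omega) le_rfl hz'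
      omega
    · intro z
      simp only [mem_union, mem_image, Finset.mem_Icc, mem_singleton]
      constructor
      · rintro (⟨k, hk, rfl⟩ | rfl)
        · exact ⟨k, by omega, rfl⟩
        · exact ⟨j + 1, by omega, rfl⟩
      · rintro ⟨k, hk, rfl⟩
        by_cases h : k = j + 1
        · right; rw [h]
        · left; exact ⟨k, by omega, rfl⟩

theorem PS.to_fun {u v : V} {F : Finset V} (h : PS G u v F) :
    ∃ r : ℕ → V, r 0 = u ∧ r (F.card - 1) = v ∧
      (∀ k, k + 1 < F.card → G.Adj (r k) (r (k + 1))) ∧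
      (∀ k l, k < F.card → l < F.card → r k = r l → k = l) ∧
      ∀ z, z ∈ F ↔ ∃ k, k < F.card ∧ r k = z := by
  induction h with
  | single u => exact ⟨fun _ => u, rfl, rfl, by simp, by simp, by simp [eq_comm]⟩
  | @cons u v' v F hadj hp hu ih =>
    obtain ⟨r, h0, h1, h2, h3, h4⟩ := ih
    have hpos := hp.card_pos
    rw [card_insert_of_notMem hu]
    refine ⟨fun n => Nat.casesOn n u r, rfl, ?_, ?_, ?_, ?_⟩
    · obtain ⟨m, hm⟩ : ∃ m, F.card = m + 1 := ⟨F.card - 1, by omega⟩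
      rw [hm] at h1 ⊢
      simpa using h1
    · intro k hk
      cases k with
      | zero => simpa [h0] using hadj
      | succ k => exact h2 k (by omega)
    · intro k l hk hl hkl
      cases k with
      | zero =>
        cases l with
        | zero => rfl
        | succ l => exact absurd ((h4 u).2 ⟨l, by omega, hkl.symm⟩) hu
      | succ k =>
        cases l with
        | zero => exact absurd ((h4 u).2 ⟨k, by omega, hkl⟩) hu
        | succ l => rw [h3 k l (by omega) (by omega) hkl]
    · intro z
      rw [mem_insert, h4]
      constructor
      · rintro (rfl | ⟨k, hk, rfl⟩)
        · exact ⟨0, by omega, rfl⟩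
        · exact ⟨k + 1, by omega, rfl⟩
      · rintro ⟨k, hk, rfl⟩
        cases k with
        | zero => exact Or.inl rfl
        | succ k => exact Or.inr ⟨k, by omega, rfl⟩

/-- A path that starts in `X`, ends in `Y` and avoids `Z` contains a path from `X` to `Y`
whose interior avoids `X`, `Y` and `Z`. -/
theorem PS.link {u v : V} {F : Finset V} (h : PS G u v F) (X Y Z : V → Prop)
    (hu : X u) (hv : Y v) (hZ : ∀ z ∈ F, ¬ Z z) :
    ∃ x y J, PS G x y J ∧ X x ∧ Y y ∧ J ⊆ F ∧
      ∀ z ∈ J, (X z → z = x) ∧ (Y z → z = y) ∧ ¬ Z z := by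
  -- strip the part before the last vertex of `X`, then the part after the first one of `Y`
  have key : ∀ {u v : V} {F : Finset V}, PS G u v F → Y v →
      ∃ y J, PS G u y J ∧ Y y ∧ J ⊆ F ∧ ∀ z ∈ J, Y z → z = y := by
    intro u v F h hv
    induction h with
    | single u => exact ⟨u, {u}, PS.single u, hv, Subset.refl _, by simp⟩
    | @cons u v' v F hadj hp hu ih =>
      by_cases hY : Y u
      · exact ⟨u, {u}, PS.single u, hY, by simp, by simp⟩
      · obtain ⟨y, J, h1, h2, h3, h4⟩ := ih hv
        refine ⟨y, insert u J, PS.cons hadj h1 (fun h => hu (h3 h)), h2,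
          insert_subset_insert _ h3, ?_⟩
        intro z hz hzY
        rw [mem_insert] at hz
        rcases hz with rfl | hz
        · exact absurd hzY hY
        · exact h4 z hz hzY
  have key2 : ∃ x J, PS G x v J ∧ X x ∧ J ⊆ F ∧ ∀ z ∈ J, X z → z = x := by
    obtain ⟨x, J, h1, h2, h3, h4⟩ : ∃ x J, PS G v x J ∧ X x ∧ J ⊆ F ∧ ∀ z ∈ J, X z → z = x := by
      have h' := h.symm
      clear h hv
      induction h' with
      | single u => exact ⟨u, {u}, PS.single u, hu, Subset.refl _, by simp⟩
      | @cons u v' v F hadj hp hu' ih =>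
        by_cases hY : X u
        · exact ⟨u, {u}, PS.single u, hY, by simp, by simp⟩
        · obtain ⟨y, J, h1, h2, h3, h4⟩ := ih hu (fun z hz => hZ z (mem_insert_of_mem hz))
          refine ⟨y, insert u J, PS.cons hadj h1 (fun h => hu' (h3 h)), h2,
            insert_subset_insert _ h3, ?_⟩
          intro z hz hzY
          rw [mem_insert] at hz
          rcases hz with rfl | hz
          · exact absurd hzY hY
          · exact h4 z hz hzY
    exact ⟨x, J, h1.symm, h2, h3, h4⟩
  obtain ⟨x, J, h1, h2, h3, h4⟩ := key2
  obtain ⟨y, J', h1', h2', h3', h4'⟩ := key h1 hv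
  exact ⟨x, y, J', h1', h2, h2', h3'.trans h3,
    fun z hz => ⟨h4 z (h3' hz), h4' z hz, hZ z (h3 (h3' hz))⟩⟩

/-- A path is cut at any of its vertices. -/
theorem PS.split {u v x : V} {F : Finset V} (h : PS G u v F) (hx : x ∈ F) :
    ∃ F₁ F₂, PS G u x F₁ ∧ PS G x v F₂ ∧ F₁ ∪ F₂ = F ∧ ∀ z ∈ F₁, z ∈ F₂ → z = x := by
  induction h with
  | single u =>
    rw [mem_singleton] at hx
    subst hx
    exact ⟨{x}, {x}, PS.single x, PS.single x, by simp, by simp⟩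
  | @cons u v' v F hadj hp hu ih =>
    by_cases hxu : x = u
    · subst hxu
      exact ⟨{x}, insert x F, PS.single x, PS.cons hadj hp hu, by simp, by simp⟩
    · obtain ⟨F₁, F₂, h1, h2, h3, h4⟩ := ih (by simpa [hxu] using hx)
      refine ⟨insert u F₁, F₂, PS.cons hadj h1 ?_, h2, by rw [insert_union, h3], ?_⟩
      · intro h; exact hu (h3 ▸ mem_union_left _ h)
      · intro z hz hz2
        rw [mem_insert] at hz
        rcases hz with rfl | hz
        · exact absurd (h3 ▸ mem_union_right _ hz2) hu
        · exact h4 z hz hz2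

end Paths

/-! ### The standing assumptions -/

theorem not_reachable_of_closed {G : SimpleGraph V} {S : Set V} (W : V → Prop)
    (hW : ∀ u v, W u → v ∉ S → G.Adj u v → W v) (x y : (Sᶜ : Set V)) (hx : W x) (hy : ¬ W y) :
    ¬ (G.induce Sᶜ).Reachable x y := by
  rintro ⟨p⟩
  induction p with
  | nil => exact hy hx
  | @cons a b _ h p ih => exact ih (hW _ _ hx b.2 h) hy

section Assumptions

variable [Fintype V] [DecidableEq V] {G : SimpleGraph V} [DecidableRel G.Adj]

/-- The situation to be refuted: `G` is 1-tough with minimum degree at least `d`, cycles have at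
most `c ≤ 2 * d + 1` vertices, paths have at most `N` vertices, and `N` is at least `c + 2`.
Cycles appear as paths with adjacent ends. -/
structure Hyp (G : SimpleGraph V) [DecidableRel G.Adj] (d c N : ℕ) : Prop where
  deg : ∀ v, d ≤ (G.neighborFinset v).card
  cyc : ∀ u v F, PS G u v F → G.Adj v u → 3 ≤ F.card → F.card ≤ c
  path : ∀ u v F, PS G u v F → F.card ≤ N
  hN : c + 2 ≤ N
  hc : c ≤ 2 * d + 1
  h3 : 3 ≤ c
  avoid : ∀ v x y, x ≠ v → y ≠ v → ∃ F, PS G x y F ∧ v ∉ F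
  tough : OneTough G

/-- Two internally disjoint paths with the same ends form a cycle. -/
theorem Hyp.cyc2 {d c N : ℕ} (H : Hyp G d c N) {u v : V} {F F' : Finset V} (h : PS G u v F)
    (h' : PS G u v F') (hne : u ≠ v) (hd : ∀ z ∈ F, z ∈ F' → z = u ∨ z = v)
    (h3 : 3 ≤ (F ∪ F').card) : (F ∪ F').card ≤ c := by
  obtain ⟨w, hw, hp⟩ := h.tail hne
  by_cases hwv : w = v
  -- here `F` is the edge `u v`, which closes `F'`
  · subst hwv
    have hF := hp.eq_singleton rfl
    have e : ∀ z, z ∈ F' ↔ z ∈ F ∪ F' := by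
      intro z
      rw [mem_union]
      refine ⟨Or.inr, ?_⟩
      rintro (hz | hz)
      · by_cases hzu : z = u
        · rw [hzu]; exact h'.left_mem
        · have : z ∈ F.erase u := mem_erase.2 ⟨hzu, hz⟩
          rw [hF, mem_singleton] at this
          rw [this]; exact h'.right_mem
      · exact hz
    exact H.cyc _ _ _ (h'.congr e) hw.symm h3
  · have hq := (hp.join h'.symm (by
      intro z hz hz'
      rw [mem_erase] at hz
      exact (hd z hz.2 hz').resolve_left hz.1))
    have e : ∀ z, z ∈ F.erase u ∪ F' ↔ z ∈ F ∪ F' := by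
      intro z
      simp only [mem_union, mem_erase]
      by_cases hz : z = u
      · subst hz; simp [h'.left_mem, h.left_mem]
      · simp [hz]
    exact H.cyc _ _ _ (hq.congr e) hw h3

omit [DecidableRel G.Adj] in
/-- Toughness in the form used below: there cannot be more than `|S|` representatives outside
`S`, any two of which are separated by a set closed under adjacency in `G \ S`. -/
theorem tough_count (ht : OneTough G) (S R : Finset V) (hR : S.card + 1 ≤ R.card)
    (h2 : 2 ≤ R.card) (hRS : ∀ r ∈ R, r ∉ S)
    (hsep : ∀ r ∈ R, ∀ r' ∈ R, r ≠ r' → ∃ W : V → Prop,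
      (∀ u v, W u → v ∉ S → G.Adj u v → W v) ∧ ((W r ∧ ¬ W r') ∨ (W r' ∧ ¬ W r))) : False := by
  classical
  have key : R.card ≤ compCount G (S : Set V) := by
    unfold compCount
    rw [Nat.card_eq_fintype_card]
    let f : R → (G.induce (S : Set V)ᶜ).ConnectedComponent := fun r =>
      (G.induce (S : Set V)ᶜ).connectedComponentMk ⟨r.1, by simpa using hRS r.1 r.2⟩
    have hf : Function.Injective f := by
      intro r r' h
      by_contra hne
      have hr := SimpleGraph.ConnectedComponent.exact h
      obtain ⟨W, hW, h | h⟩ := hsep r.1 r.2 r'.1 r'.2 (fun h => hne (Subtype.ext h))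
      · exact not_reachable_of_closed (S := (S : Set V)) W (by simpa using hW) _ _ h.1 h.2 hr
      · exact not_reachable_of_closed (S := (S : Set V)) W (by simpa using hW) _ _ h.1 h.2 hr.symm
    simpa using Fintype.card_le_of_injective f hf
  have := ht S (by omega)
  omega

end Assumptions

/-! ### Cyclic sequences -/

/-- A cycle of `G` of length `L`, written as an `L`-periodic sequence of vertices. -/
structure Cyc (G : SimpleGraph V) (f : ℕ → V) (L : ℕ) : Prop where
  three : 3 ≤ L
  per : ∀ n, f (n + L) = f n
  adj : ∀ n, G.Adj (f n) (f (n + 1))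
  inj : ∀ i j, f i = f j → i % L = j % L

section Cyclic

variable {G : SimpleGraph V} {f : ℕ → V} {L : ℕ}

theorem Cyc.mod (C : Cyc G f L) (n : ℕ) : f (n % L) = f n := by
  have h : ∀ m r, f (r + L * m) = f r := by
    intro m
    induction m with
    | zero => simp
    | succ m ih => intro r; rw [Nat.mul_succ, ← Nat.add_assoc, C.per, ih]
  have := h (n / L) (n % L)
  rw [Nat.mod_add_div] at this
  exact this.symm

theorem Cyc.shift (C : Cyc G f L) (k : ℕ) : Cyc G (fun n => f (n + k)) L where
  three := C.three
  per n := by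
    have := C.per (n + k)
    rw [show n + L + k = n + k + L by omega]; exact this
  adj n := by
    have := C.adj (n + k)
    rw [show n + 1 + k = n + k + 1 by omega]; exact this
  inj i j h := by
    have := C.inj _ _ h
    exact Nat.ModEq.add_right_cancel' k this

theorem Cyc.mod_add (C : Cyc G f L) (n j : ℕ) : f (n % L + j) = f (n + j) :=
  (C.shift j).mod n

theorem Cyc.win (C : Cyc G f L) {i j : ℕ} (hij : i ≤ j) (hj : j < i + L) (h : f i = f j) :
    i = j := by
  have h1 := C.inj i j h
  obtain ⟨e, rfl⟩ := Nat.exists_eq_add_of_le hij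
  have h2 : (i + 0) % L = (i + e) % L := h1
  have h3 := Nat.ModEq.add_left_cancel' i h2
  have h4 : 0 % L = e % L := h3
  rw [Nat.zero_mod, Nat.mod_eq_of_lt (by omega)] at h4
  omega

theorem Cyc.inj_win (C : Cyc G f L) (i : ℕ) {k l : ℕ} (hk : i ≤ k) (hk' : k < i + L)
    (hl : i ≤ l) (hl' : l < i + L) (h : f k = f l) : k = l := by
  rcases le_total k l with h1 | h1
  · exact C.win h1 (by omega) h
  · exact (C.win h1 (by omega) h.symm).symm

/-- Every vertex of the cycle is met in any window of `L` consecutive indices. -/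
theorem Cyc.exists_win (C : Cyc G f L) (i n : ℕ) : ∃ m, m < L ∧ f (i + m) = f n := by
  have h3 := C.three
  have hi : i % L < L := Nat.mod_lt _ (by omega)
  refine ⟨(n + (L - i % L)) % L, Nat.mod_lt _ (by omega), ?_⟩
  rw [add_comm, C.mod_add]
  have : (n + (L - i % L) + i) % L = n % L := by
    rw [Nat.add_mod, ← Nat.mod_mod i L, ← Nat.add_mod, Nat.mod_mod,
      Nat.add_assoc, Nat.sub_add_cancel hi.le, Nat.add_mod_right]
  rw [← C.mod, this, C.mod]

theorem Cyc.arc [DecidableEq V] (C : Cyc G f L) {i j : ℕ} (hij : i ≤ j) (hj : j < i + L) :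
    PS G (f i) (f j) ((Finset.Icc i j).image f) :=
  PS.of_fun f i j hij (fun k _ _ => C.adj k)
    (fun _ _ a b c d h => C.inj_win i a (by omega) c (by omega) h)

theorem Cyc.card_arc [DecidableEq V] (C : Cyc G f L) {i j : ℕ} (hj : j < i + L) :
    ((Finset.Icc i j).image f).card = j + 1 - i := by
  rw [Finset.card_image_of_injOn, Nat.card_Icc]
  intro k hk l hl h
  simp only [Finset.coe_Icc, Set.mem_Icc] at hk hl
  exact C.inj_win i hk.1 (by omega) hl.1 (by omega) h

theorem Cyc.of_seq (h : ℕ → V) (M : ℕ) (h3 : 3 ≤ M)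
    (hadj : ∀ n, n + 1 < M → G.Adj (h n) (h (n + 1))) (hlast : G.Adj (h (M - 1)) (h 0))
    (hinj : ∀ i j, i < M → j < M → h i = h j → i = j) : Cyc G (fun n => h (n % M)) M where
  three := h3
  per n := by simp
  adj n := by
    have hn : n % M < M := Nat.mod_lt _ (by omega)
    by_cases e : n % M + 1 = M
    · have : (n + 1) % M = 0 := by
        rw [Nat.add_mod, Nat.mod_eq_of_lt (show 1 < M by omega), e, Nat.mod_self]
      show G.Adj (h (n % M)) (h ((n + 1) % M))
      rw [this]
      convert hlast using 2
      omega
    · have : (n + 1) % M = n % M + 1 := by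
        rw [Nat.add_mod, Nat.mod_eq_of_lt (show 1 < M by omega), Nat.mod_eq_of_lt (by omega)]
      show G.Adj (h (n % M)) (h ((n + 1) % M))
      rw [this]
      exact hadj _ (by omega)
  inj i j e := hinj _ _ (Nat.mod_lt _ (by omega)) (Nat.mod_lt _ (by omega)) e

theorem PS.toCyc [DecidableEq V] {u v : V} {F : Finset V} (h : PS G u v F) (hadj : G.Adj v u)
    (h3 : 3 ≤ F.card) : ∃ f, Cyc G f F.card ∧ ∀ z, z ∈ F ↔ ∃ n, f n = z := by
  obtain ⟨r, h0, h1, h2, h4, h5⟩ := h.to_fun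
  refine ⟨_, Cyc.of_seq r F.card h3 h2 (by rwa [h0, h1]) h4, fun z => ?_⟩
  rw [h5]
  constructor
  · rintro ⟨k, hk, rfl⟩
    exact ⟨k, by simp [Nat.mod_eq_of_lt hk]⟩
  · rintro ⟨k, rfl⟩
    exact ⟨k % F.card, Nat.mod_lt _ (by omega), rfl⟩

/-- The `l` vertices strictly between `f i` and `f (i + l + 1)` are replaced by a path that is
disjoint from the cycle. The indices of the new sequence are controlled: it runs through the
remaining part of the old cycle first and then through the new path. -/
theorem Cyc.splice [DecidableEq V] (C : Cyc G f L) {a b : V} {F : Finset V} (h : PS G a b F)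
    (hoff : ∀ n, f n ∉ F) {i l : ℕ} (hl : l + 1 < L) (ha : G.Adj a (f i))
    (hb : G.Adj b (f (i + l + 1))) :
    ∃ f', Cyc G f' (L - l + F.card) ∧ (∀ n, n < L - l → f' n = f (i + l + 1 + n)) ∧
      (∀ n, f' (L - l + n) ∈ F ∨ F.card ≤ n) ∧
      ∀ z, (∃ n, f' n = z) ↔ (∃ n, n < L - l ∧ f (i + l + 1 + n) = z) ∨ z ∈ F := by
  obtain ⟨r, h0, h1, h2, h4, h5⟩ := h.symm.to_fun
  have h5' : ∀ k, k < F.card → r k ∈ F := fun k hk => (h5 _).2 ⟨k, hk, rfl⟩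
  have hpos := h.card_pos
  -- the new path is traversed from `a` to `b`, starting after `f (i + L) = f i`
  set s : ℕ → V := fun k => r (F.card - 1 - k) with hs
  have hs0 : s 0 = a := by simp [hs, h1]
  have hs1 : s (F.card - 1) = b := by simp [hs, h0]
  have hsF : ∀ k, k < F.card → s k ∈ F := fun k hk => h5' _ (by omega)
  set q : ℕ → V := fun n => if n < L - l then f (i + l + 1 + n) else s (n - (L - l)) with hq
  have hq1 : ∀ n, n < L - l → q n = f (i + l + 1 + n) := fun n hn => by simp [hq, hn]
  have hq2 : ∀ n, q (L - l + n) = s n := fun n => by simp [hq]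
  have hlast : f (i + l + 1 + (L - l - 1)) = f i := by
    rw [show i + l + 1 + (L - l - 1) = i + L by omega, C.per]
  refine ⟨fun n => q (n % (L - l + F.card)), Cyc.of_seq q _ (by omega) ?_ ?_ ?_, ?_, ?_, ?_⟩
  · intro n hn
    rcases lt_trichotomy (n + 1) (L - l) with h | h | h
    · rw [hq1 _ h, hq1 _ (by omega)]
      exact C.adj _
    · rw [hq1 n (by omega), h, show L - l = L - l + 0 by omega, hq2, hs0,
        show n = L - l - 1 by omega, hlast]
      exact ha.symm
    · obtain ⟨m, rfl⟩ := Nat.exists_eq_add_of_le (show L - l ≤ n by omega)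
      rw [hq2, Nat.add_assoc, hq2]
      have := h2 (F.card - 1 - (m + 1)) (by omega)
      rw [show F.card - 1 - (m + 1) + 1 = F.card - 1 - m by omega] at this
      exact this.symm
  · rw [show L - l + F.card - 1 = L - l + (F.card - 1) by omega, hq2, hs1, hq1 _ (by omega)]
    exact hb
  · have hcross : ∀ m n, m < L - l → L - l ≤ n → n < L - l + F.card → q m ≠ q n := by
      intro m n hm hn hn' e
      obtain ⟨n, rfl⟩ := Nat.exists_eq_add_of_le hn
      rw [hq1 _ hm, hq2] at e
      exact hoff _ (e ▸ hsF n (by omega))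
    intro m n hm hn e
    rcases lt_or_ge m (L - l) with hm' | hm' <;> rcases lt_or_ge n (L - l) with hn' | hn'
    · rw [hq1 _ hm', hq1 _ hn'] at e
      have := C.inj_win (i + l + 1) (by omega) (by omega) (by omega) (by omega) e
      omega
    · exact absurd e (hcross m n hm' hn' hn)
    · exact absurd e.symm (hcross n m hn' hm' hm)
    · obtain ⟨m, rfl⟩ := Nat.exists_eq_add_of_le hm'
      obtain ⟨n, rfl⟩ := Nat.exists_eq_add_of_le hn'
      rw [hq2, hq2] at e
      have := h4 _ _ (by omega) (by omega) e
      omega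
  · intro n hn
    simp only
    rw [Nat.mod_eq_of_lt (by omega), hq1 _ hn]
  · intro n
    rcases lt_or_ge n F.card with hn | hn
    · left
      simp only
      rw [Nat.mod_eq_of_lt (by omega), hq2]
      exact hsF n hn
    · exact Or.inr hn
  · intro z
    constructor
    · rintro ⟨n, rfl⟩
      have hn : n % (L - l + F.card) < L - l + F.card := Nat.mod_lt _ (by omega)
      simp only
      generalize n % (L - l + F.card) = n at hn ⊢
      rcases lt_or_ge n (L - l) with hn' | hn'
      · exact Or.inl ⟨n, hn', (hq1 n hn').symm⟩
      · obtain ⟨n, rfl⟩ := Nat.exists_eq_add_of_le hn'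
        rw [hq2]
        exact Or.inr (hsF n (by omega))
    · rintro (⟨n, hn, rfl⟩ | hz)
      · exact ⟨n, by simp only; rw [Nat.mod_eq_of_lt (by omega), hq1 _ hn]⟩
      · obtain ⟨k, hk, rfl⟩ := (h5 z).1 hz
        refine ⟨L - l + (F.card - 1 - k), ?_⟩
        simp only
        rw [Nat.mod_eq_of_lt (by omega), hq2]
        simp only [hs]
        congr 1
        omega

theorem gap_count (L : ℕ) (p : ℕ → Prop) [DecidablePred p] (hL : p L) (wt : ℕ → ℕ)
    (hwt : ∀ n, n < L → p n → ∀ j, 0 < j → j < wt n → ¬ p (n + j)) :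
    ∑ n ∈ (Finset.range L).filter p, wt n ≤ L := by
  have h1 : ((Finset.range L).filter p).sum wt =
      (((Finset.range L).filter p).biUnion fun n => Finset.Ico n (n + wt n)).card := by
    rw [Finset.card_biUnion]
    · simp
    · have key : ∀ x y, x < y → x < L → p x → p y →
          Disjoint (Finset.Ico x (x + wt x)) (Finset.Ico y (y + wt y)) := by
        intro x y hxy hx hpx hpy
        rw [Finset.disjoint_left]
        intro z hz hz'
        rw [Finset.mem_Ico] at hz hz'
        refine hwt x hx hpx (y - x) (by omega) (by omega) ?_
        rwa [show x + (y - x) = y by omega]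
      intro x hx y hy hne
      simp only [coe_filter, Finset.mem_range, Set.mem_ofPred_eq] at hx hy
      rcases lt_or_gt_of_ne hne with h | h
      · exact key x y h hx.1 hx.2 hy.2
      · exact (key y x h hy.1 hy.2 hx.2).symm
  rw [h1]
  calc _ ≤ (Finset.range L).card := Finset.card_le_card ?_
    _ = L := Finset.card_range L
  intro z hz
  simp only [mem_biUnion, mem_filter, Finset.mem_range, Finset.mem_Ico] at hz ⊢
  obtain ⟨n, ⟨hn, hpn⟩, hz⟩ := hz
  by_contra h
  refine hwt n hn hpn (L - n) (by omega) (by omega) ?_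
  rwa [show n + (L - n) = L by omega]

end Cyclic

/-! ### A cycle with a path attached by both ends -/

/-- A cycle `f` of length `L` and a disjoint path from `a` to `b` with vertex set `F`, together
exhausting the order `N` of a longest path, such that the two ends of the path have distinct
neighbours on the cycle. -/
structure Config [DecidableEq V] (G : SimpleGraph V) (N : ℕ) (f : ℕ → V) (L : ℕ) (a b : V)
    (F : Finset V) : Prop where
  cyc : Cyc G f L
  ps : PS G a b F
  off : ∀ n, f n ∉ F
  ends : ∃ i j, G.Adj a (f i) ∧ G.Adj b (f j) ∧ f i ≠ f j
  tot : L + F.card = N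

/-- All configurations have an attached path of at least `g` vertices. -/
def MinOrder [DecidableEq V] (G : SimpleGraph V) (N g : ℕ) : Prop :=
  ∀ f L a b F, Config G N f L a b F → g ≤ F.card

section Attached

variable [Fintype V] [DecidableEq V] {G : SimpleGraph V} [DecidableRel G.Adj]
variable {d c N : ℕ}

theorem Hyp.cyc_le (H : Hyp G d c N) {f : ℕ → V} {L : ℕ} (C : Cyc G f L) : L ≤ c := by
  have h3 := C.three
  have h1 := C.card_arc (i := 0) (j := L - 1) (by omega)
  have h2 := H.cyc _ _ _ (C.arc (i := 0) (j := L - 1) (by omega) (by omega)) (by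
    have := C.adj (L - 1)
    rwa [show L - 1 + 1 = 0 + L by omega, C.per] at this) (by omega)
  omega

/-- The neighbours of an end of a longest path lie on that path. -/
theorem Hyp.end_nbr (H : Hyp G d c N) {u v w : V} {F : Finset V} (h : PS G u v F)
    (hF : N ≤ F.card) (hw : G.Adj u w) : w ∈ F := by
  by_contra hw'
  have := H.path _ _ _ (PS.cons hw.symm h hw')
  rw [card_insert_of_notMem hw'] at this
  omega

variable {f : ℕ → V} {L : ℕ} {a b : V} {F : Finset V}

omit [Fintype V] [DecidableRel G.Adj] in
theorem Config.symm (K : Config G N f L a b F) : Config G N f L b a F where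
  cyc := K.cyc
  ps := K.ps.symm
  off := K.off
  ends := by
    obtain ⟨i, j, h1, h2, h3⟩ := K.ends
    exact ⟨j, i, h2, h1, h3.symm⟩
  tot := K.tot

omit [Fintype V] [DecidableRel G.Adj] in
theorem Config.shift (K : Config G N f L a b F) (k : ℕ) :
    Config G N (fun n => f (n + k)) L a b F where
  cyc := K.cyc.shift k
  ps := K.ps
  off n := K.off _
  ends := by
    obtain ⟨i, j, h1, h2, h3⟩ := K.ends
    obtain ⟨i', -, hi⟩ := K.cyc.exists_win k i
    obtain ⟨j', -, hj⟩ := K.cyc.exists_win k j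
    refine ⟨i', j', ?_, ?_, ?_⟩
    · rwa [add_comm, hi]
    · rwa [add_comm, hj]
    · rwa [add_comm, hi, add_comm, hj]
  tot := K.tot

theorem Config.two_le (H : Hyp G d c N) (K : Config G N f L a b F) : 2 ≤ F.card := by
  have := H.cyc_le K.cyc
  have := K.tot
  have := H.hN
  omega

/-- A path of `F.card` vertices whose last vertex is joined to a disjoint cycle extends around
this cycle, so the neighbours of its first vertex are under control. -/
theorem Hyp.nbr_of (H : Hyp G d c N) (C : Cyc G f L) (h : PS G a b F) (hoff : ∀ n, f n ∉ F)
    (htot : L + F.card = N) {j : ℕ} (hb : G.Adj b (f j)) {w : V} (hw : G.Adj a w) :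
    w ∈ F ∨ ∃ n, f n = w := by
  have h3' := C.three
  have hdis : ∀ z ∈ F, z ∉ (Finset.Icc j (j + L - 1)).image f := by
    intro z hz hz'
    rw [mem_image] at hz'
    obtain ⟨n, -, rfl⟩ := hz'
    exact hoff n hz
  have hp := h.join_edge hb (C.arc (i := j) (j := j + L - 1) (by omega) (by omega)) hdis
  have hcard : N ≤ (F ∪ (Finset.Icc j (j + L - 1)).image f).card := by
    rw [card_union_of_disjoint (Finset.disjoint_left.2 hdis), C.card_arc (by omega)]
    omega
  have := H.end_nbr hp hcard hw
  rw [mem_union, mem_image] at this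
  rcases this with h | ⟨n, -, h⟩
  · exact Or.inl h
  · exact Or.inr ⟨n, h⟩

theorem Config.nbr (H : Hyp G d c N) (K : Config G N f L a b F) {w : V} (hw : G.Adj a w) :
    w ∈ F ∨ ∃ n, f n = w := by
  obtain ⟨-, j, -, h2, -⟩ := K.ends
  exact H.nbr_of K.cyc K.ps K.off K.tot h2 hw

/-- Neighbours of the two ends of a shortest attached path are far apart on the cycle. -/
theorem Config.gap (H : Hyp G d c N) (K : Config G N f L a b F) (M : MinOrder G N F.card)
    {i l : ℕ} (hl : l + 1 < L) (ha : G.Adj a (f i)) (hb : G.Adj b (f (i + l + 1))) :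
    F.card ≤ l := by
  by_contra hlt
  obtain ⟨f', C', h1, -, h3⟩ := K.cyc.splice K.ps K.off hl ha hb
  have htot := K.tot
  have hL : f' (L - l - 1) = f i := by
    rw [h1 _ (by omega), show i + l + 1 + (L - l - 1) = i + L by omega, K.cyc.per]
  rcases Nat.eq_zero_or_pos l with rfl | hpos
  · have := H.cyc_le C'
    have := H.hN
    omega
  · have hK : Config G N f' (L - l + F.card) (f (i + 1)) (f (i + l))
        ((Finset.Icc (i + 1) (i + l)).image f) := by
      refine ⟨C', K.cyc.arc (by omega) (by omega), ?_, ⟨L - l - 1, 0, ?_, ?_, ?_⟩, ?_⟩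
      · intro n hn
        rw [mem_image] at hn
        obtain ⟨m, hm, hmn⟩ := hn
        rw [Finset.mem_Icc] at hm
        rcases (h3 (f m)).1 ⟨n, hmn.symm⟩ with ⟨k, hk, hk'⟩ | h
        · have := K.cyc.inj_win (i + 1) (by omega) (by omega) (by omega) (by omega) hk'
          omega
        · exact K.off m h
      · rw [hL]; exact (K.cyc.adj i).symm
      · rw [h1 0 (by omega)]; exact K.cyc.adj (i + l)
      · rw [hL, h1 0 (by omega)]
        intro e
        have := K.cyc.win (by omega) (by omega) e
        omega
      · rw [K.cyc.card_arc (by omega)]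
        omega
    have := M _ _ _ _ _ hK
    rw [K.cyc.card_arc (by omega)] at this
    omega

/-- An end of a shortest attached path has no two consecutive neighbours on the cycle. -/
theorem Config.not_consec (H : Hyp G d c N) (K : Config G N f L a b F)
    (M : MinOrder G N F.card) {i : ℕ} (h0 : G.Adj a (f i)) (h1 : G.Adj a (f (i + 1))) :
    False := by
  have h2 := K.two_le H
  have h3 := K.cyc.three
  have haF := K.ps.left_mem
  have hab : a ≠ b := by
    intro e
    have := K.ps.eq_singleton e
    rw [this, card_singleton] at h2
    omega
  obtain ⟨f', C', -, -, hf'⟩ := K.cyc.splice (PS.single a) (fun n hn => by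
    rw [mem_singleton] at hn
    exact K.off n (hn ▸ haF)) (l := 0) (by omega) h0 h1
  obtain ⟨w, hw, hp⟩ := K.ps.tail hab
  have hold : ∀ n, ∃ m, f' m = f n := by
    intro n
    rw [hf']
    obtain ⟨m, hm, e⟩ := K.cyc.exists_win (i + 0 + 1) n
    exact Or.inl ⟨m, by omega, e⟩
  obtain ⟨-, j, -, hj, -⟩ := K.ends
  obtain ⟨m, hm⟩ := hold j
  obtain ⟨m', hm'⟩ := (hf' a).2 (Or.inr (mem_singleton_self a))
  have hK : Config G N f' (L - 0 + ({a} : Finset V).card) w b (F.erase a) := by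
    refine ⟨C', hp, ?_, ⟨m', m, ?_, ?_, ?_⟩, ?_⟩
    · intro n hn
      rw [mem_erase] at hn
      rcases (hf' _).1 ⟨n, rfl⟩ with ⟨k, -, hk⟩ | h
      · exact K.off _ (hk ▸ hn.2)
      · exact hn.1 (mem_singleton.1 h)
    · rw [hm']; exact hw.symm
    · rw [hm]; exact hj
    · rw [hm, hm']
      intro e
      exact K.off j (e ▸ haF)
    · rw [card_erase_of_mem haF, card_singleton]
      have := K.tot
      omega
  have := M _ _ _ _ _ hK
  rw [card_erase_of_mem haF] at this
  omega

theorem Config.len (H : Hyp G d c N) (K : Config G N f L a b F) (M : MinOrder G N F.card) :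
    2 * F.card + 2 ≤ L := by
  obtain ⟨i, j, h1, h2, h3⟩ := K.ends
  obtain ⟨m, hm, e⟩ := K.cyc.exists_win i j
  rw [← e] at h2 h3
  have hm0 : m ≠ 0 := by rintro rfl; exact h3 rfl
  have g1 := K.gap H M (i := i) (l := m - 1) (by omega) h1
    (by rwa [show i + (m - 1) + 1 = i + m by omega])
  have g2 := K.symm.gap H M (i := i + m) (l := L - m - 1) (by omega) h2
    (by rwa [show i + m + (L - m - 1) + 1 = i + L by omega, K.cyc.per])
  omega

end Attached

/-! ### Counting attachments -/

section Counting

variable [Fintype V] [DecidableEq V] {G : SimpleGraph V} [DecidableRel G.Adj]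
variable {d c N : ℕ} {f : ℕ → V} {L : ℕ} {a b : V} {F : Finset V}

/-- If `a` has a neighbour on the cycle that is not a neighbour of `b`, then one such neighbour
is followed by a full gap without neighbours of `a` or `b`: take the last attachment before the
first neighbour of `b`. -/
theorem Config.exists_gap (H : Hyp G d c N) (K : Config G N f L a b F)
    (M : MinOrder G N F.card) (hA : ∃ n, G.Adj a (f n) ∧ ¬ G.Adj b (f n)) :
    ∃ n, n < L ∧ G.Adj a (f n) ∧ ¬ G.Adj b (f n) ∧
      ∀ j, 1 ≤ j → j ≤ F.card → ¬ (G.Adj a (f (n + j)) ∨ G.Adj b (f (n + j))) := by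
  have h3 := K.cyc.three
  obtain ⟨n0, h0, h0'⟩ := hA
  have hB : ∃ m, m < L ∧ G.Adj b (f (n0 + m)) := by
    obtain ⟨-, j, -, hj, -⟩ := K.ends
    obtain ⟨m, hm, e⟩ := K.cyc.exists_win n0 j
    exact ⟨m, hm, e ▸ hj⟩
  have hB' : ∃ m, G.Adj b (f (n0 + m)) := ⟨_, hB.choose_spec.2⟩
  set m := Nat.find hB' with hm
  have hm1 : G.Adj b (f (n0 + m)) := Nat.find_spec hB'
  have hm2 : ∀ k, k < m → ¬ G.Adj b (f (n0 + k)) := fun k hk => Nat.find_min hB' hk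
  have hmL : m < L := by
    obtain ⟨m', h, h'⟩ := hB
    exact lt_of_le_of_lt (Nat.find_min' hB' h') h
  have hm0 : m ≠ 0 := fun e => h0' (by rw [e] at hm1; exact hm1)
  -- the last neighbour of `a` strictly before that neighbour of `b`
  have hQ : ∃ k, k < m ∧ G.Adj a (f (n0 + k)) ∧
      ∀ l, k < l → l < m → ¬ G.Adj a (f (n0 + l)) := by
    have hne : ((Finset.range m).filter fun k => G.Adj a (f (n0 + k))).Nonempty :=
      ⟨0, by simp [h0]; omega⟩
    have h1 := Finset.max'_mem _ hne
    refine ⟨_, by simpa using (mem_filter.1 h1).1, (mem_filter.1 h1).2, fun l hl hlm hl' => ?_⟩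
    have := Finset.le_max' ((Finset.range m).filter fun k => G.Adj a (f (n0 + k))) l
      (mem_filter.2 ⟨Finset.mem_range.2 hlm, hl'⟩)
    omega
  obtain ⟨k, hk, hk1, hk2⟩ := hQ
  have hg := K.gap H M (i := n0 + k) (l := m - k - 1) (by omega) hk1
    (by rwa [show n0 + k + (m - k - 1) + 1 = n0 + m by omega])
  refine ⟨(n0 + k) % L, Nat.mod_lt _ (by omega), ?_, ?_, ?_⟩
  · rwa [K.cyc.mod]
  · rw [K.cyc.mod]; exact hm2 k hk
  · intro j hj hj'
    rw [K.cyc.mod_add, show n0 + k + j = n0 + (k + j) by omega, not_or]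
    exact ⟨hk2 _ (by omega) (by omega), hm2 _ (by omega)⟩

theorem Config.image_eq (H : Hyp G d c N) (K : Config G N f L a b F) :
    ((Finset.range L).filter fun n => G.Adj a (f n)).image f = G.neighborFinset a \ F := by
  ext z
  simp only [mem_image, mem_filter, Finset.mem_range, mem_sdiff, mem_neighborFinset]
  constructor
  · rintro ⟨n, ⟨-, h⟩, rfl⟩
    exact ⟨h, K.off n⟩
  · rintro ⟨h, hF⟩
    rcases K.nbr H h with h' | ⟨n, rfl⟩
    · exact absurd h' hF
    · exact ⟨n % L, ⟨Nat.mod_lt _ (by have := K.cyc.three; omega), by rwa [K.cyc.mod]⟩,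
        K.cyc.mod n⟩

theorem Config.card_eq (H : Hyp G d c N) (K : Config G N f L a b F) :
    ((Finset.range L).filter fun n => G.Adj a (f n)).card = (G.neighborFinset a \ F).card := by
  rw [← K.image_eq H, Finset.card_image_of_injOn]
  intro k hk l hl h
  simp only [coe_filter, Finset.mem_range, Set.mem_ofPred_eq] at hk hl
  exact K.cyc.inj_win 0 (by omega) (by omega) (by omega) (by omega) h

theorem Hyp.deg_off (H : Hyp G d c N) (haF : a ∈ F) :
    d + 1 ≤ (G.neighborFinset a \ F).card + F.card ∧
      ((G.neighborFinset a \ F).card + F.card = d + 1 → F.erase a ⊆ G.neighborFinset a) := by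
  have h1 := H.deg a
  have h2 := card_sdiff_add_card_inter (G.neighborFinset a) F
  have hsub : G.neighborFinset a ∩ F ⊆ F.erase a := by
    intro z hz
    rw [mem_inter, mem_neighborFinset] at hz
    exact mem_erase.2 ⟨hz.1.ne', hz.2⟩
  have h3 := card_le_card hsub
  have h4 := card_erase_add_one haF
  refine ⟨by omega, fun e => ?_⟩
  have := eq_of_subset_of_card_le hsub (by omega)
  rw [← this]
  exact inter_subset_left

/-- With `A` and `B` the attachments of the two ends, `q` the number of common ones and `t` the
number of attachments followed by a full gap, the cycle is too long unless `A = B`. -/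
theorem count_arith {α β q k t g d L : ℕ} (hk : k + q = α + β) (hq1 : q ≤ α) (hq2 : q ≤ β)
    (hα : d + 1 ≤ α + g) (hβ : d + 1 ≤ β + g) (hg : 2 ≤ g) (hβ1 : 1 ≤ β) (hα1 : 1 ≤ α)
    (hL : 2 * k + t * (g - 1) ≤ L) (hLc : L ≤ 2 * d + 1) (hLg : 2 * g + 2 ≤ L)
    (ht : q + (if q < α then 1 else 0) + (if q < β then 1 else 0) ≤ t) : q = α ∧ q = β := by
  obtain ⟨h, rfl⟩ : ∃ h, g = h + 2 := ⟨g - 2, by omega⟩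
  have hmono : (q + (if q < α then 1 else 0) + (if q < β then 1 else 0)) * (h + 1) ≤
      t * (h + 2 - 1) := Nat.mul_le_mul_right _ ht
  by_contra hne
  have key : ∀ β : ℕ, d + 1 ≤ β + (h + 2) → 1 ≤ β → 2 * (β + 1) + (β + 1) * (h + 1) ≤ L →
      False := by
    intro β h1 h2 h3
    obtain ⟨e, rfl⟩ : ∃ e, β = e + 1 := ⟨β - 1, by omega⟩
    nlinarith [Nat.zero_le (e * h)]
  by_cases h1 : q < α <;> by_cases h2 : q < β
  · simp only [h1, h2, if_true] at hmono
    have : 0 ≤ q * h := Nat.zero_le _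
    rcases Nat.eq_zero_or_pos h with rfl | hh
    · omega
    · nlinarith [Nat.mul_le_mul_left q hh]
  · simp only [h1, h2, if_true, if_false] at hmono
    have e : q = β := by omega
    subst e
    exact key q hβ hβ1 (by nlinarith)
  · simp only [h1, h2, if_true, if_false] at hmono
    have e : q = α := by omega
    subst e
    exact key q hα hα1 (by nlinarith)
  · omega

theorem Config.count_aux (H : Hyp G d c N) (K : Config G N f L a b F)
    (M : MinOrder G N F.card) (h0 : G.Adj a (f 0)) :
    (∀ n, G.Adj a (f n) ↔ G.Adj b (f n)) ∧
      (G.neighborFinset a \ F).card * (F.card + 1) ≤ L := by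
  classical
  have h2 := K.two_le H
  have h3 := K.cyc.three
  have hlen := K.len H M
  set pA : ℕ → Prop := fun n => G.Adj a (f n) with hpA
  set pB : ℕ → Prop := fun n => G.Adj b (f n) with hpB
  set tc : ℕ → Prop := fun n => ∀ j, 1 ≤ j → j ≤ F.card → ¬ (pA (n + j) ∨ pB (n + j)) with htc
  set A := (Finset.range L).filter pA with hA
  set B := (Finset.range L).filter pB with hB
  have hAc : A.card = (G.neighborFinset a \ F).card := K.card_eq H
  have hBc : B.card = (G.neighborFinset b \ F).card := K.symm.card_eq H
  have hAd := (H.deg_off K.ps.left_mem).1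
  have hBd := (H.deg_off K.ps.right_mem).1
  have hAB : (Finset.range L).filter (fun n => pA n ∨ pB n) = A ∪ B := by
    rw [filter_or]
  have hsmall : ∀ n j, pA n ∨ pB n → 1 ≤ j → j ≤ F.card → (pA n → ¬ pB (n + j)) ∧
      (pB n → ¬ pA (n + j)) := by
    intro n j _ hj hj'
    constructor
    · intro h h'
      have := K.gap H M (i := n) (l := j - 1) (by omega) h
        (by rwa [show n + (j - 1) + 1 = n + j by omega])
      omega
    · intro h h'
      have := K.symm.gap H M (i := n) (l := j - 1) (by omega) h
        (by rwa [show n + (j - 1) + 1 = n + j by omega])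
      omega
  have hwt := gap_count L (fun n => pA n ∨ pB n)
    (Or.inl (by show G.Adj a (f L); have := K.cyc.per 0; rw [Nat.zero_add] at this; rwa [this]))
    (fun n => 2 + if tc n then F.card - 1 else 0) (by
      intro n _ hn j hj hj'
      by_cases ht : tc n
      · simp only [ht, if_true] at hj'
        exact ht j hj (by omega)
      · simp only [ht, if_false] at hj'
        have : j = 1 := by omega
        subst this
        rintro (h | h)
        · rcases hn with hn | hn
          · exact K.not_consec H M hn h
          · exact (hsmall n 1 (Or.inr hn) le_rfl (by omega)).2 hn h
        · rcases hn with hn | hn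
          · exact (hsmall n 1 (Or.inl hn) le_rfl (by omega)).1 hn h
          · exact K.symm.not_consec H M hn h)
  rw [hAB, sum_add_distrib, ← sum_filter, sum_const, sum_const, smul_eq_mul, smul_eq_mul] at hwt
  have hinter : A ∩ B ⊆ (A ∪ B).filter tc := by
    intro n hn
    rw [mem_inter, hA, hB, mem_filter, mem_filter] at hn
    rw [mem_filter, mem_union, hA, mem_filter]
    refine ⟨Or.inl hn.1, fun j hj hj' => ?_⟩
    have := hsmall n j (Or.inl hn.1.2) hj hj'
    rw [not_or]
    exact ⟨this.2 hn.2.2, this.1 hn.1.2⟩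
  have hT : (A ∩ B).card + (if (A ∩ B).card < A.card then 1 else 0) +
      (if (A ∩ B).card < B.card then 1 else 0) ≤ ((A ∪ B).filter tc).card := by
    have hsplit : (A ∩ B).card + (((A ∪ B).filter tc).filter fun n => n ∈ A ∧ n ∉ B).card +
        (((A ∪ B).filter tc).filter fun n => n ∈ B ∧ n ∉ A).card ≤
        ((A ∪ B).filter tc).card := by
      rw [← card_union_of_disjoint, ← card_union_of_disjoint]
      · refine card_le_card (union_subset (union_subset hinter (filter_subset _ _))
          (filter_subset _ _))
      · rw [Finset.disjoint_left]
        intro z hz hz'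
        simp only [mem_union, mem_inter, mem_filter] at hz hz'
        tauto
      · rw [Finset.disjoint_left]
        intro z hz hz'
        simp only [mem_inter, mem_filter] at hz hz'
        tauto
    have hex : ∀ X Y : Finset ℕ, (X ∩ Y).card < X.card → ∃ n ∈ X, n ∉ Y := by
      intro X Y h
      by_contra hcon
      push Not at hcon
      rw [inter_eq_left.2 hcon] at h
      omega
    have hx1 : (if (A ∩ B).card < A.card then 1 else 0) ≤
        (((A ∪ B).filter tc).filter fun n => n ∈ A ∧ n ∉ B).card := by
      split_ifs with h
      · obtain ⟨n, hn, hn'⟩ := hex A B h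
        rw [hA, mem_filter] at hn
        obtain ⟨m, hm1, hm2, hm3, hm4⟩ := K.exists_gap H M
          ⟨n, hn.2, fun h => hn' (mem_filter.2 ⟨hn.1, h⟩)⟩
        refine Finset.card_pos.2 ⟨m, ?_⟩
        simp only [mem_filter, mem_union, hA, hB, Finset.mem_range]
        exact ⟨⟨Or.inl ⟨hm1, hm2⟩, hm4⟩, ⟨hm1, hm2⟩, fun h => hm3 h.2⟩
      · omega
    have hx2 : (if (A ∩ B).card < B.card then 1 else 0) ≤
        (((A ∪ B).filter tc).filter fun n => n ∈ B ∧ n ∉ A).card := by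
      split_ifs with h
      · obtain ⟨n, hn, hn'⟩ := hex B A (by rwa [inter_comm])
        rw [hB, mem_filter] at hn
        obtain ⟨m, hm1, hm2, hm3, hm4⟩ := K.symm.exists_gap H M
          ⟨n, hn.2, fun h => hn' (mem_filter.2 ⟨hn.1, h⟩)⟩
        refine Finset.card_pos.2 ⟨m, ?_⟩
        simp only [mem_filter, mem_union, hA, hB, Finset.mem_range]
        exact ⟨⟨Or.inr ⟨hm1, hm2⟩, fun j h1 h2 h => hm4 j h1 h2 h.symm⟩, ⟨hm1, hm2⟩,
          fun h => hm3 h.2⟩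
      · omega
    omega
  have hBne : 1 ≤ B.card := by
    obtain ⟨-, j, -, hj, -⟩ := K.ends
    refine Finset.card_pos.2 ⟨j % L, mem_filter.2 ⟨?_, ?_⟩⟩
    · rw [Finset.mem_range]; exact Nat.mod_lt _ (by omega)
    · show G.Adj b (f (j % L)); rwa [K.cyc.mod]
  have hAne : 1 ≤ A.card := Finset.card_pos.2 ⟨0, mem_filter.2 ⟨by simp; omega, h0⟩⟩
  have hLc : L ≤ 2 * d + 1 := (H.cyc_le K.cyc).trans H.hc
  have hres := count_arith (card_union_add_card_inter A B) (card_le_card inter_subset_left)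
    (card_le_card inter_subset_right) (g := F.card) (d := d) (by omega) (by omega) h2 hBne hAne
    (by linarith) hLc hlen hT
  have hA1 : A ∩ B = A := eq_of_subset_of_card_le inter_subset_left (by omega)
  have hB1 : A ∩ B = B := eq_of_subset_of_card_le inter_subset_right (by omega)
  have hABe : A = B := hA1.symm.trans hB1
  constructor
  · intro n
    have hmem : n % L < L := Nat.mod_lt _ (by omega)
    have : n % L ∈ A ↔ n % L ∈ B := by rw [hABe]
    simpa [hA, hB, hpA, hpB, hmem, K.cyc.mod] using this
  · rw [← hAc]
    have hfull : (A ∪ B).filter tc = A := by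
      refine Subset.antisymm ?_ (hA1.symm.subset.trans hinter)
      rw [← hABe, union_idempotent]
      exact filter_subset _ _
    rw [hfull, ← hABe, union_idempotent] at hwt
    obtain ⟨e, he⟩ : ∃ e, F.card = e + 1 := ⟨F.card - 1, by omega⟩
    rw [he] at hwt ⊢
    simp only [Nat.add_sub_cancel] at hwt
    nlinarith

/-- The structure forced by counting: in a shortest attachment both ends of the attached path
have the same neighbours on the cycle, all counting inequalities are tight, and both ends are
joined to the whole attached path. -/
structure Tight (G : SimpleGraph V) [DecidableRel G.Adj] (d : ℕ) (f : ℕ → V) (L : ℕ) (a b : V)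
    (F : Finset V) : Prop where
  same : G.neighborFinset a \ F = G.neighborFinset b \ F
  two : 2 ≤ (G.neighborFinset a \ F).card
  sum : (G.neighborFinset a \ F).card + F.card = d + 1
  prod : (G.neighborFinset a \ F).card * (F.card + 1) ≤ L
  full : ∀ z ∈ F, z ≠ a → G.Adj a z
  full' : ∀ z ∈ F, z ≠ b → G.Adj b z
  gap : ∀ n j, G.Adj a (f n) → 1 ≤ j → j ≤ F.card → ¬ G.Adj a (f (n + j))
  on : ∀ z, G.Adj a z → z ∉ F → ∃ n, f n = z

theorem Config.tight (H : Hyp G d c N) (K : Config G N f L a b F)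
    (M : MinOrder G N F.card) : Tight G d f L a b F := by
  have h3 := K.cyc.three
  have hlen := K.len H M
  have hmain : (∀ n, G.Adj a (f n) ↔ G.Adj b (f n)) ∧
      (G.neighborFinset a \ F).card * (F.card + 1) ≤ L := by
    obtain ⟨i, -, hi, -, -⟩ := K.ends
    have := (K.shift i).count_aux H M (by simpa using hi)
    refine ⟨fun n => ?_, this.2⟩
    obtain ⟨m, -, hm⟩ := K.cyc.exists_win i n
    rw [← hm, add_comm]
    exact this.1 m
  obtain ⟨hsame, hprod⟩ := hmain
  have hset : G.neighborFinset a \ F = G.neighborFinset b \ F := by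
    rw [← K.image_eq H, ← K.symm.image_eq H]
    simp only [hsame]
  have htwo : 2 ≤ (G.neighborFinset a \ F).card := by
    obtain ⟨i, j, hi, hj, hij⟩ := K.ends
    have : 1 < (G.neighborFinset a \ F).card := by
      rw [Finset.one_lt_card]
      refine ⟨f i, ?_, f j, ?_, hij⟩
      · simp [hi, K.off]
      · simp [hsame, hj, K.off]
    exact this
  have hd := H.deg_off (a := a) K.ps.left_mem
  have hd' := H.deg_off (a := b) K.ps.right_mem
  have hLc : L ≤ 2 * d + 1 := (H.cyc_le K.cyc).trans H.hc
  have hsum : (G.neighborFinset a \ F).card + F.card = d + 1 := by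
    by_contra hne
    obtain ⟨e, he⟩ : ∃ e, (G.neighborFinset a \ F).card = e + 2 :=
      ⟨(G.neighborFinset a \ F).card - 2, by omega⟩
    rw [he] at hprod hd hne
    have h2 := K.two_le H
    obtain ⟨h, hh⟩ : ∃ h, F.card = h + 2 := ⟨F.card - 2, by omega⟩
    rw [hh] at hprod hd hne
    have : d + 2 ≤ e + 2 + (h + 2) := by omega
    nlinarith [Nat.zero_le (e * h)]
  refine ⟨hset, htwo, hsum, hprod, ?_, ?_, ?_, ?_⟩
  · intro z hz hza
    have := hd.2 hsum (mem_erase.2 ⟨hza, hz⟩)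
    rwa [mem_neighborFinset] at this
  · intro z hz hza
    have := hd'.2 (by rw [← hset]; exact hsum) (mem_erase.2 ⟨hza, hz⟩)
    rwa [mem_neighborFinset] at this
  · intro n j hn hj hj' h
    have := K.gap H M (i := n) (l := j - 1) (by omega) hn
      (by rw [show n + (j - 1) + 1 = n + j by omega]; exact (hsame _).1 h)
    omega
  · intro z hz hzF
    exact (K.nbr H hz).resolve_left hzF

end Counting

/-! ### No cycle with an attached path exists -/

section NoConfig

variable [Fintype V] [DecidableEq V] {G : SimpleGraph V} [DecidableRel G.Adj]
variable {d c N : ℕ} {f : ℕ → V} {L : ℕ} {a b : V} {F : Finset V}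

/-- Every vertex of a shortest attached path has all its outside neighbours among the common
neighbours of the two ends: the attached path can be rearranged to start at that vertex. -/
theorem Config.closed (H : Hyp G d c N) (K : Config G N f L a b F) (M : MinOrder G N F.card)
    {u w : V} (hu : u ∈ F) (hw : G.Adj u w) : w ∈ F ∨ G.Adj a w := by
  have T := K.tight H M
  by_cases hua : u = a
  · exact Or.inr (hua ▸ hw)
  obtain ⟨i, j, hi, hj, hij⟩ := K.ends
  have hR : PS G u a F := by
    obtain ⟨F₁, F₂, h1, h2, h3, h4⟩ := K.ps.split hu
    obtain ⟨v, hv, hp⟩ := h1.symm.tail hua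
    have hv1 := mem_erase.1 hp.left_mem
    have hbv : G.Adj b v := by
      refine T.full' v (h3 ▸ mem_union_left _ hv1.2) ?_
      rintro rfl
      exact hv1.1 (h4 _ hv1.2 h2.right_mem)
    refine (h2.join_edge hbv hp ?_).congr ?_
    · intro z hz hz'
      rw [mem_erase] at hz'
      exact hz'.1 (h4 z hz'.2 hz)
    · intro z
      rw [← h3]
      simp only [mem_union, mem_erase]
      by_cases hz : z = u
      · subst hz; simp [h2.left_mem]
      · simp only [hz, ne_eq, not_false_eq_true, true_and]; exact or_comm
  rcases H.nbr_of K.cyc hR K.off K.tot hi hw with h | ⟨n, rfl⟩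
  · exact Or.inl h
  -- some neighbour of `a` on the cycle differs from `w`
  · obtain ⟨m, hm, hne⟩ : ∃ m, G.Adj a (f m) ∧ f n ≠ f m := by
      by_cases e : f n = f i
      · refine ⟨j, ?_, e ▸ hij⟩
        have : f j ∈ G.neighborFinset a \ F := by
          rw [T.same]; simp [hj, K.off]
        simpa [K.off] using this
      · exact ⟨i, hi, e⟩
    have K' : Config G N f L u a F := ⟨K.cyc, hR, K.off, ⟨n, m, hw, hm, hne⟩, K.tot⟩
    have : f n ∈ G.neighborFinset a \ F := by
      rw [← (K'.tight H M).same]; simp [hw, K.off]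
    exact Or.inr (by simpa [K.off] using this)

/-- All but at most one of the arcs between consecutive attachments have exactly `F.card` inner
vertices, and all of them do if there are at least three attachments. -/
theorem Config.bad_count (H : Hyp G d c N) (K : Config G N f L a b F)
    (M : MinOrder G N F.card) (h0 : G.Adj a (f 0)) :
    (∀ n m, n < L → m < L → G.Adj a (f n) → G.Adj a (f m) →
      ¬ G.Adj a (f (n + F.card + 1)) → ¬ G.Adj a (f (m + F.card + 1)) → n = m) ∧
    (3 ≤ (G.neighborFinset a \ F).card → ∀ n, G.Adj a (f n) →
      G.Adj a (f (n + F.card + 1))) := by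
  have T := K.tight H M
  have h2 := K.two_le H
  have h3 := K.cyc.three
  have hLc : L ≤ 2 * d + 1 := (H.cyc_le K.cyc).trans H.hc
  have hsum := T.sum
  have hwt := gap_count L (fun n => G.Adj a (f n))
    (by have := K.cyc.per 0; rw [Nat.zero_add] at this; rwa [this])
    (fun n => F.card + 1 + if ¬ G.Adj a (f (n + F.card + 1)) then 1 else 0) (by
      intro n _ hn j hj hj'
      by_cases h : G.Adj a (f (n + F.card + 1))
      · simp only [h, not_true_eq_false, if_false] at hj'
        exact T.gap n j hn hj (by omega)
      · simp only [h, not_false_eq_true, if_true] at hj'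
        rcases Nat.lt_or_ge F.card j with h' | h'
        · rw [show n + j = n + F.card + 1 by omega]; exact h
        · exact T.gap n j hn hj h')
  rw [sum_add_distrib, ← sum_filter, sum_const, sum_const, smul_eq_mul, smul_eq_mul,
    mul_one, K.card_eq H] at hwt
  have htwo := T.two
  generalize hk : (G.neighborFinset a \ F).card = k at *
  obtain ⟨k, rfl⟩ : ∃ k', k = k' + 2 := ⟨k - 2, by omega⟩
  obtain ⟨h, hh⟩ : ∃ h, F.card = h + 2 := ⟨F.card - 2, by omega⟩
  have hcard : k * (h + 1) + (((Finset.range L).filter fun n => G.Adj a (f n)).filter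
      fun n => ¬ G.Adj a (f (n + F.card + 1))).card ≤ 1 := by
    generalize (((Finset.range L).filter fun n => G.Adj a (f n)).filter
      fun n => ¬ G.Adj a (f (n + F.card + 1))).card = e at *
    rw [hh] at hwt hsum
    nlinarith
  constructor
  · intro n m hn hm hna hma hnb hmb
    refine Finset.card_le_one.1 (le_trans (Nat.le_add_left _ _) hcard) n ?_ m ?_
    · simp only [mem_filter, Finset.mem_range]; exact ⟨⟨hn, hna⟩, hnb⟩
    · simp only [mem_filter, Finset.mem_range]; exact ⟨⟨hm, hma⟩, hmb⟩
  · intro hk3 n hn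
    by_contra hcon
    have hpos : 0 < (((Finset.range L).filter fun n => G.Adj a (f n)).filter
        fun n => ¬ G.Adj a (f (n + F.card + 1))).card := by
      refine Finset.card_pos.2 ⟨n % L, ?_⟩
      simp only [mem_filter, Finset.mem_range]
      refine ⟨⟨Nat.mod_lt _ (by omega), by rwa [K.cyc.mod]⟩, ?_⟩
      rwa [Nat.add_assoc, K.cyc.mod_add]
    have : 1 ≤ k * (h + 1) := Nat.mul_pos (by omega) (by omega)
    omega

theorem Config.dvd_iff (H : Hyp G d c N) (K : Config G N f L a b F)
    (M : MinOrder G N F.card) (h0 : G.Adj a (f 0)) (hk : 3 ≤ (G.neighborFinset a \ F).card)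
    (n : ℕ) : G.Adj a (f n) ↔ (F.card + 1) ∣ n := by
  have T := K.tight H M
  have hstep := (K.bad_count H M h0).2 hk
  have hmul : ∀ m, G.Adj a (f ((F.card + 1) * m)) := by
    intro m
    induction m with
    | zero => simpa using h0
    | succ m ih => exact hstep _ ih
  constructor
  · intro h
    rw [Nat.dvd_iff_mod_eq_zero]
    by_contra hne
    have hlt : n % (F.card + 1) < F.card + 1 := Nat.mod_lt _ (by omega)
    refine T.gap _ (n % (F.card + 1)) (hmul (n / (F.card + 1))) (by omega) (by omega) ?_
    rwa [Nat.div_add_mod]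
  · rintro ⟨m, rfl⟩
    exact hmul m

/-- An arc with exactly `F.card` inner vertices between two attachments is interchangeable with
the attached path, so its vertices have no other outside neighbours than the attachments. -/
theorem Config.seg_closed (H : Hyp G d c N) (K : Config G N f L a b F)
    (M : MinOrder G N F.card) {n : ℕ} (hn : G.Adj a (f n)) (hn' : G.Adj a (f (n + F.card + 1)))
    {u w : V} (hu : u ∈ (Finset.Icc (n + 1) (n + F.card)).image f) (hw : G.Adj u w) :
    w ∈ (Finset.Icc (n + 1) (n + F.card)).image f ∨ G.Adj a w := by
  have T := K.tight H M
  have h2 := K.two_le H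
  have hlen := K.len H M
  have hsame : ∀ m, G.Adj a (f m) → G.Adj b (f m) := by
    intro m hm
    have : f m ∈ G.neighborFinset b \ F := by
      rw [← T.same]; simp [hm, K.off]
    simpa [K.off] using this
  obtain ⟨f', C', h1, -, h3⟩ := K.cyc.splice K.ps K.off (i := n) (l := F.card) (by omega) hn
    (hsame _ hn')
  rw [show L - F.card + F.card = L by omega] at C'
  have hL : f' (L - F.card - 1) = f n := by
    rw [h1 _ (by omega), show n + F.card + 1 + (L - F.card - 1) = n + L by omega, K.cyc.per]
  have hf0 : f' 0 = f (n + F.card + 1) := h1 0 (by omega)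
  have hcard : ((Finset.Icc (n + 1) (n + F.card)).image f).card = F.card := by
    rw [K.cyc.card_arc (by omega)]; omega
  have hne : f n ≠ f (n + F.card + 1) := by
    intro e
    have := K.cyc.win (by omega) (by omega) e
    omega
  have K' : Config G N f' L (f (n + F.card)) (f (n + 1))
      ((Finset.Icc (n + 1) (n + F.card)).image f) := by
    refine ⟨C', (K.cyc.arc (by omega) (by omega)).symm, ?_, ⟨0, L - F.card - 1, ?_, ?_, ?_⟩, ?_⟩
    · intro m hm
      rw [mem_image] at hm
      obtain ⟨k, hk, hkm⟩ := hm
      rw [Finset.mem_Icc] at hk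
      rcases (h3 (f k)).1 ⟨m, hkm.symm⟩ with ⟨l, hl, hl'⟩ | h
      · have := K.cyc.inj_win (n + 1) (by omega) (by omega) (by omega) (by omega) hl'
        omega
      · exact K.off k h
    · rw [hf0]; exact K.cyc.adj _
    · rw [hL]; exact (K.cyc.adj n).symm
    · rw [hL, hf0]; exact hne.symm
    · rw [hcard]; exact K.tot
  have M' : MinOrder G N ((Finset.Icc (n + 1) (n + F.card)).image f).card := by rwa [hcard]
  have T' := K'.tight H M'
  have hk : (G.neighborFinset (f (n + F.card)) \ (Finset.Icc (n + 1) (n + F.card)).image f).card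
      = (G.neighborFinset a \ F).card := by
    have := T.sum
    have := T'.sum
    omega
  rcases K'.closed H M' hu hw with h | h
  · exact Or.inl h
  by_cases hwF : w ∈ (Finset.Icc (n + 1) (n + F.card)).image f
  · exact Or.inl hwF
  right
  have hmem0 : G.Adj (f (n + F.card)) (f' 0) := by rw [hf0]; exact K.cyc.adj _
  rcases Nat.lt_or_ge (G.neighborFinset a \ F).card 3 with h3k | h3k
  -- two attachments only: these are the two ends of the arc
  · have hsub : {f n, f (n + F.card + 1)} ⊆ G.neighborFinset (f (n + F.card)) \
        (Finset.Icc (n + 1) (n + F.card)).image f := by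
      have hx : f n ∈ G.neighborFinset (f (n + 1)) \
          (Finset.Icc (n + 1) (n + F.card)).image f := by
        rw [mem_sdiff, mem_neighborFinset, ← hL]
        exact ⟨hL ▸ (K.cyc.adj n).symm, K'.off _⟩
      rw [← T'.same] at hx
      have hy : f (n + F.card + 1) ∈ G.neighborFinset (f (n + F.card)) \
          (Finset.Icc (n + 1) (n + F.card)).image f := by
        rw [mem_sdiff, mem_neighborFinset, ← hf0]
        exact ⟨hmem0, K'.off _⟩
      intro z hz
      rw [mem_insert, mem_singleton] at hz
      rcases hz with rfl | rfl
      · exact hx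
      · exact hy
    have heq := eq_of_subset_of_card_le hsub (by rw [hk, card_pair hne]; omega)
    have hwm : w ∈ ({f n, f (n + F.card + 1)} : Finset V) := by
      rw [heq, mem_sdiff, mem_neighborFinset]
      exact ⟨h, hwF⟩
    rw [mem_insert, mem_singleton] at hwm
    rcases hwm with rfl | rfl <;> assumption
  -- three or more attachments: they are equally spaced on both cycles
  · have hd' := K'.dvd_iff H M' hmem0 (by omega)
    rw [hcard] at hd'
    have hd := (K.shift (n + F.card + 1)).dvd_iff H M (by simpa using hn') h3k
    obtain ⟨m, rfl⟩ := T'.on w h hwF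
    obtain ⟨m, hm, e⟩ := C'.exists_win 0 m
    rw [Nat.zero_add] at e
    rw [← e] at h ⊢
    have hdvd := (hd' m).1 h
    have hdL : (F.card + 1) ∣ L := by
      rw [← hd', ← Nat.zero_add L, C'.per]; exact hmem0
    have hml : m < L - F.card := by
      obtain ⟨x, rfl⟩ := hdvd
      obtain ⟨y, hy⟩ := hdL
      rw [hy] at hm ⊢
      have hxy : x < y := lt_of_mul_lt_mul_left hm (Nat.zero_le _)
      have : (F.card + 1) * (x + 1) ≤ (F.card + 1) * y := Nat.mul_le_mul_left _ hxy
      rw [Nat.mul_succ] at this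
      omega
    rw [h1 m hml, add_comm]
    exact (hd m).2 hdvd

theorem Hyp.no_min_config (H : Hyp G d c N) (K : Config G N f L a b F)
    (M : MinOrder G N F.card) : False := by
  obtain ⟨i, -, hi, -, -⟩ := K.ends
  replace K := K.shift i
  have h0 : G.Adj a ((fun n => f (n + i)) 0) := by simpa using hi
  generalize (fun n => f (n + i)) = f at *
  clear hi
  have T := K.tight H M
  have h2 := K.two_le H
  have h3 := K.cyc.three
  set S := G.neighborFinset a \ F with hS
  have hmemS : ∀ z, z ∈ S ↔ G.Adj a z ∧ z ∉ F := by
    intro z; rw [hS, mem_sdiff, mem_neighborFinset]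
  set Q := (Finset.range L).filter fun n => G.Adj a (f n) with hQ
  have hQc : Q.card = S.card := K.card_eq H
  have hmemQ : ∀ n, n ∈ Q ↔ n < L ∧ G.Adj a (f n) := by
    intro n; rw [hQ, mem_filter, Finset.mem_range]
  have haF := K.ps.left_mem
  have hanot : a ∉ Q.image fun n => f (n + 1) := by
    intro h
    rw [mem_image] at h
    obtain ⟨n, -, e⟩ := h
    exact K.off (n + 1) (e ▸ haF)
  have hinj : Set.InjOn (fun n => f (n + 1)) (Q : Set ℕ) := by
    intro x hx y hy e
    have hx' := (hmemQ x).1 hx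
    have hy' := (hmemQ y).1 hy
    have := K.cyc.inj_win 1 (by omega) (by omega) (by omega) (by omega) e
    omega
  have hRc : (insert a (Q.image fun n => f (n + 1))).card = S.card + 1 := by
    rw [card_insert_of_notMem hanot, card_image_of_injOn hinj, hQc]
  have hcl : ∀ u v, u ∈ F → v ∉ S → G.Adj u v → v ∈ F := by
    intro u v hu hv huv
    rcases K.closed H M hu huv with h | h
    · exact h
    · by_contra hvF
      exact hv ((hmemS v).2 ⟨h, hvF⟩)
  have hclseg : ∀ n, G.Adj a (f n) → G.Adj a (f (n + F.card + 1)) → ∀ u v,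
      u ∈ (Finset.Icc (n + 1) (n + F.card)).image f → v ∉ S → G.Adj u v →
      v ∈ (Finset.Icc (n + 1) (n + F.card)).image f := by
    intro n hn hn' u v hu hv huv
    rcases K.seg_closed H M hn hn' hu huv with h | h
    · exact h
    · by_cases hvF : v ∈ F
      -- then `u` would be a neighbour of `v` outside `F` and hence an attachment
      · exfalso
        rw [mem_image] at hu
        obtain ⟨j, hj, rfl⟩ := hu
        rw [Finset.mem_Icc] at hj
        have := hcl v (f j) hvF (fun hjS => ?_) huv.symm
        · exact K.off j this
        · refine T.gap n (j - n) hn (by omega) (by omega) ?_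
          rw [show n + (j - n) = j by omega]
          exact ((hmemS _).1 hjS).1
      · exact absurd ((hmemS v).2 ⟨h, hvF⟩) hv
  have hsegnot : ∀ n m, n ∈ Q → m ∈ Q → n ≠ m →
      f (m + 1) ∉ (Finset.Icc (n + 1) (n + F.card)).image f := by
    intro n m hn hm hne h
    rw [mem_image] at h
    obtain ⟨j, hj, e⟩ := h
    rw [Finset.mem_Icc] at hj
    rw [hmemQ] at hn hm
    have e1 := K.cyc.inj _ _ e
    have e2 : (j - 1) % L = m % L := by
      refine Nat.ModEq.add_right_cancel' 1 ?_
      rw [show j - 1 + 1 = j by omega]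
      exact e1
    have e3 : f (j - 1) = f m := by rw [← K.cyc.mod, e2, K.cyc.mod]
    rcases Nat.eq_or_lt_of_le (show n + 1 ≤ j by omega) with h | h
    · rw [← h, Nat.add_sub_cancel] at e2
      rw [Nat.mod_eq_of_lt hn.1, Nat.mod_eq_of_lt hm.1] at e2
      exact hne e2
    · refine T.gap n (j - 1 - n) hn.2 (by omega) (by omega) ?_
      rw [show n + (j - 1 - n) = j - 1 by omega, e3]
      exact hm.2
  have hbad := (K.bad_count H M h0).1
  have hself : ∀ n, f (n + 1) ∈ (Finset.Icc (n + 1) (n + F.card)).image f := fun n =>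
    mem_image_of_mem f (by rw [Finset.mem_Icc]; omega)
  refine tough_count H.tough S (insert a (Q.image fun n => f (n + 1))) (by omega)
    (by have h : 2 ≤ S.card := T.two; omega) ?_ ?_
  · intro r hr hrS
    rw [hmemS] at hrS
    rw [mem_insert, mem_image] at hr
    rcases hr with rfl | ⟨n, hn, rfl⟩
    · exact hrS.1.ne rfl
    · exact T.gap n 1 ((hmemQ n).1 hn).2 le_rfl (by omega) hrS.1
  · intro r hr r' hr' hne
    rw [mem_insert, mem_image] at hr hr'
    rcases hr with rfl | ⟨n, hn, rfl⟩
    · rcases hr' with rfl | ⟨m, hm, rfl⟩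
      · exact absurd rfl hne
      · exact ⟨fun z => z ∈ F, hcl, Or.inl ⟨haF, K.off _⟩⟩
    · rcases hr' with rfl | ⟨m, hm, rfl⟩
      · exact ⟨fun z => z ∈ F, hcl, Or.inr ⟨haF, K.off _⟩⟩
      · have hnm : n ≠ m := by rintro rfl; exact hne rfl
        have hn1 := (hmemQ n).1 hn
        have hm1 := (hmemQ m).1 hm
        by_cases h : G.Adj a (f (n + F.card + 1))
        · exact ⟨_, hclseg n hn1.2 h, Or.inl ⟨hself n, hsegnot n m hn hm hnm⟩⟩
        · by_cases h' : G.Adj a (f (m + F.card + 1))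
          · exact ⟨_, hclseg m hm1.2 h', Or.inr ⟨hself m, hsegnot m n hm hn hnm.symm⟩⟩
          · exact absurd (hbad n m hn1.1 hm1.1 hn1.2 hm1.2 h h') hnm

theorem Hyp.no_config (H : Hyp G d c N) (f : ℕ → V) (L : ℕ) (a b : V) (F : Finset V) :
    ¬ Config G N f L a b F := by
  classical
  intro K
  have hex : ∃ g, ∃ f L a b F, Config G N f L a b F ∧ F.card = g := ⟨_, f, L, a, b, F, K, rfl⟩
  obtain ⟨f', L', a', b', F', K', hg⟩ := Nat.find_spec hex
  refine H.no_min_config K' (fun f'' L'' a'' b'' F'' K'' => ?_)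
  rw [hg]
  exact Nat.find_min' hex ⟨f'', L'', a'', b'', F'', K'', rfl⟩

end NoConfig

/-! ### Longest paths -/

/-- The vertices `q 0, …, q m` form a path of `G`, in this order. -/
structure Pth (G : SimpleGraph V) (q : ℕ → V) (m : ℕ) : Prop where
  adj : ∀ k, k < m → G.Adj (q k) (q (k + 1))
  inj : ∀ k l, k ≤ m → l ≤ m → q k = q l → k = l

section Longest

variable [Fintype V] [DecidableEq V] {G : SimpleGraph V} [DecidableRel G.Adj]
variable {d c N : ℕ} {q : ℕ → V} {m : ℕ}

omit [Fintype V] [DecidableRel G.Adj] in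
theorem Pth.arc (P : Pth G q m) {i j : ℕ} (hij : i ≤ j) (hj : j ≤ m) :
    PS G (q i) (q j) ((Finset.Icc i j).image q) :=
  PS.of_fun q i j hij (fun k _ h => P.adj k (by omega))
    (fun k l _ hk _ hl h => P.inj k l (by omega) (by omega) h)

omit [Fintype V] [DecidableRel G.Adj] in
theorem Pth.card_arc (P : Pth G q m) {i j : ℕ} (hj : j ≤ m) :
    ((Finset.Icc i j).image q).card = j + 1 - i := by
  rw [Finset.card_image_of_injOn, Nat.card_Icc]
  intro k hk l hl h
  simp only [Finset.coe_Icc, Set.mem_Icc] at hk hl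
  exact P.inj k l (by omega) (by omega) h

omit [Fintype V] [DecidableRel G.Adj] in
theorem Pth.mem_arc (P : Pth G q m) {i j k : ℕ} (hj : j ≤ m) (hk : k ≤ m) :
    q k ∈ (Finset.Icc i j).image q ↔ i ≤ k ∧ k ≤ j := by
  rw [mem_image]
  constructor
  · rintro ⟨l, hl, e⟩
    rw [Finset.mem_Icc] at hl
    have := P.inj l k (by omega) hk e
    omega
  · intro h
    exact ⟨k, by rw [Finset.mem_Icc]; exact h, rfl⟩

omit [Fintype V] [DecidableEq V] [DecidableRel G.Adj] in
theorem Pth.rev (P : Pth G q m) : Pth G (fun k => q (m - k)) m where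
  adj k hk := by
    have := P.adj (m - (k + 1)) (by omega)
    rw [show m - (k + 1) + 1 = m - k by omega] at this
    exact this.symm
  inj k l hk hl h := by
    have := P.inj (m - k) (m - l) (by omega) (by omega) h
    omega

theorem Hyp.nbr_path (H : Hyp G d c N) (P : Pth G q m) (hm : m + 1 = N) {w : V}
    (hw : G.Adj (q 0) w) : ∃ k, 1 ≤ k ∧ k ≤ m ∧ q k = w := by
  have := H.end_nbr (P.arc (Nat.zero_le m) le_rfl) (by rw [P.card_arc le_rfl]; omega) hw
  rw [mem_image] at this
  obtain ⟨k, hk, rfl⟩ := this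
  rw [Finset.mem_Icc] at hk
  refine ⟨k, Nat.one_le_iff_ne_zero.2 ?_, hk.2, rfl⟩
  rintro rfl
  exact hw.ne rfl

/-- The neighbours of the two ends of a longest path do not cross. -/
theorem Hyp.noncross (H : Hyp G d c N) (P : Pth G q m) (hm : m + 1 = N) {i j : ℕ} (hi : i ≤ m)
    (hj : j ≤ m) (h0 : G.Adj (q 0) (q i)) (h1 : G.Adj (q m) (q j)) : i ≤ j := by
  by_contra hlt
  have hN := H.hN
  have h3 := H.h3
  have hends : ¬ G.Adj (q m) (q 0) := by
    intro h
    have := H.cyc _ _ _ (P.arc (Nat.zero_le m) le_rfl) h (by rw [P.card_arc le_rfl]; omega)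
    rw [P.card_arc le_rfl] at this
    omega
  have hj0 : j ≠ 0 := by rintro rfl; exact hends h1
  have him : i ≠ m := by rintro rfl; exact hends h0.symm
  have hdis : ∀ z ∈ (Finset.Icc 0 j).image q, z ∉ (Finset.Icc i m).image q := by
    intro z hz
    rw [mem_image] at hz
    obtain ⟨k, hk, rfl⟩ := hz
    rw [Finset.mem_Icc] at hk
    rw [P.mem_arc le_rfl (by omega)]
    omega
  have hp := (P.arc (Nat.zero_le j) hj).join_edge h1.symm (P.arc hi le_rfl).symm hdis
  have hcard : ((Finset.Icc 0 j).image q ∪ (Finset.Icc i m).image q).card =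
      j + 1 + (m + 1 - i) := by
    rw [card_union_of_disjoint (Finset.disjoint_left.2 hdis), P.card_arc hj, P.card_arc le_rfl]
    omega
  obtain ⟨f, C, hf⟩ := hp.toCyc h0.symm (by rw [hcard]; omega)
  rw [hcard] at C
  by_cases e : i = j + 1
  · have := H.cyc_le C
    omega
  · obtain ⟨n, hn⟩ := (hf (q j)).1 (by
      rw [mem_union, P.mem_arc hj hj]; left; omega)
    obtain ⟨n', hn'⟩ := (hf (q i)).1 (by
      rw [mem_union, P.mem_arc le_rfl hi (i := i)]; right; omega)
    refine H.no_config f _ (q (j + 1)) (q (i - 1)) ((Finset.Icc (j + 1) (i - 1)).image q)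
      ⟨C, P.arc (by omega) (by omega), ?_, ⟨n, n', ?_, ?_, ?_⟩, ?_⟩
    · intro k hk
      rw [mem_image] at hk
      obtain ⟨l, hl, e⟩ := hk
      rw [Finset.mem_Icc] at hl
      have := (hf (q l)).2 ⟨k, e.symm⟩
      rw [mem_union, P.mem_arc hj (by omega), P.mem_arc le_rfl (by omega)] at this
      omega
    · rw [hn]; exact (P.adj j (by omega)).symm
    · rw [hn']
      have := P.adj (i - 1) (by omega)
      rwa [show i - 1 + 1 = i by omega] at this
    · rw [hn, hn']
      intro e
      have := P.inj j i hj hi e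
      omega
    · rw [P.card_arc (by omega)]
      omega

/-- A path `r 0, …, r σ` containing all neighbours of `r 0`, among them `r σ`, is rearranged into
a path from any given inner vertex `r α` to `r σ` that still contains `r 0` and all its
neighbours: go back from `r α` to `r 0` and jump to the next neighbour of `r 0` after `r α`. -/
theorem Hyp.cover (H : Hyp G d c N) {r : ℕ → V} {σ α : ℕ} (P : Pth G r σ) (hα : α < σ)
    (hσ : G.Adj (r 0) (r σ)) (hN : ∀ w, G.Adj (r 0) w → ∃ k, k ≤ σ ∧ r k = w) :
    ∃ α', α < α' ∧ α' ≤ σ ∧ (∀ k, α < k → k < α' → ¬ G.Adj (r 0) (r k)) ∧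
      PS G (r α) (r σ) ((Finset.Icc 0 α).image r ∪ (Finset.Icc α' σ).image r) ∧
      insert (r 0) (G.neighborFinset (r 0)) ⊆
        (Finset.Icc 0 α).image r ∪ (Finset.Icc α' σ).image r ∧
      d + 1 ≤ (insert (r 0) (G.neighborFinset (r 0))).card ∧
      ((Finset.Icc 0 α).image r ∪ (Finset.Icc α' σ).image r).card = α + 1 + (σ + 1 - α') := by
  have hex : ∃ k, α < k ∧ G.Adj (r 0) (r k) := ⟨σ, hα, hσ⟩
  obtain ⟨h1, h2⟩ := Nat.find_spec hex
  have h3 : Nat.find hex ≤ σ := Nat.find_min' hex ⟨hα, hσ⟩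
  have h4 : ∀ k, α < k → k < Nat.find hex → ¬ G.Adj (r 0) (r k) :=
    fun k hk hk' h => Nat.find_min hex hk' ⟨hk, h⟩
  generalize Nat.find hex = α' at h1 h2 h3 h4
  have hdis : ∀ z ∈ (Finset.Icc 0 α).image r, z ∉ (Finset.Icc α' σ).image r := by
    intro z hz
    rw [mem_image] at hz
    obtain ⟨k, hk, rfl⟩ := hz
    rw [Finset.mem_Icc] at hk
    rw [P.mem_arc le_rfl (by omega)]
    omega
  refine ⟨α', h1, h3, h4, (P.arc (Nat.zero_le α) hα.le).symm.join_edge h2 (P.arc h3 le_rfl) hdis,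
    ?_, ?_, ?_⟩
  · intro z hz
    rw [mem_insert, mem_neighborFinset] at hz
    have hz' : ∃ k, k ≤ σ ∧ r k = z ∧ (k = 0 ∨ G.Adj (r 0) (r k)) := by
      rcases hz with rfl | hz
      · exact ⟨0, by omega, rfl, Or.inl rfl⟩
      · obtain ⟨k, hk, rfl⟩ := hN z hz
        exact ⟨k, hk, rfl, Or.inr hz⟩
    obtain ⟨k, hk, rfl, hk'⟩ := hz'
    rw [mem_union, P.mem_arc hα.le hk, P.mem_arc le_rfl hk]
    by_contra hcon
    rcases hk' with rfl | hk'
    · omega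
    · exact h4 k (by omega) (by omega) hk'
  · rw [card_insert_of_notMem (by simp)]
    have := H.deg (r 0)
    omega
  · rw [card_union_of_disjoint (Finset.disjoint_left.2 hdis), P.card_arc hα.le,
      P.card_arc le_rfl]
    omega

/-- Two disjoint paths lead from `q s` and some `q a` before it to `q t` and some `q b` after it,
and meet the path `q` outside its section from `s` to `t` only in `q a` and `q b`. They are
built by moving `t` to the right, using that no single vertex separates `G`. -/
theorem Hyp.vine (H : Hyp G d c N) (P : Pth G q m) {s : ℕ} (hs : 1 ≤ s) :
    ∀ t, s ≤ t → t < m → ∃ a b x₁ x₂ F₁ F₂, a < s ∧ t < b ∧ b ≤ m ∧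
      PS G x₁ (q t) F₁ ∧ PS G x₂ (q b) F₂ ∧ (∀ z ∈ F₁, z ∉ F₂) ∧
      ((x₁ = q s ∧ x₂ = q a) ∨ (x₁ = q a ∧ x₂ = q s)) ∧
      ∀ k, k ≤ m → (k < s ∨ t < k) → q k ∈ F₁ ∪ F₂ → k = a ∨ k = b := by
  intro t hst
  induction t, hst using Nat.le_induction with
  | base =>
    intro hsm
    obtain ⟨F, hF, hFs⟩ := H.avoid (q s) (q 0) (q m)
      (fun e => by have := P.inj 0 s (by omega) (by omega) e; omega)
      (fun e => by have := P.inj m s (by omega) (by omega) e; omega)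
    obtain ⟨x, y, J, hJ, ⟨a, ha, rfl⟩, ⟨b, hb, hb', rfl⟩, -, hJ'⟩ := hF.link
      (fun z => ∃ k, k < s ∧ q k = z) (fun z => ∃ k, s < k ∧ k ≤ m ∧ q k = z)
      (fun z => z = q s) ⟨0, by omega, rfl⟩ ⟨m, hsm, le_rfl, rfl⟩
      (fun z hz e => hFs (e ▸ hz))
    refine ⟨a, b, q s, q a, {q s}, J, ha, hb, hb', PS.single _, hJ, ?_, Or.inl ⟨rfl, rfl⟩, ?_⟩
    · intro z hz hz'
      rw [mem_singleton] at hz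
      exact (hJ' z hz').2.2 hz
    · intro k hk hks hkJ
      rw [mem_union, mem_singleton] at hkJ
      rcases hkJ with e | hkJ
      · have := P.inj k s hk (by omega) e
        omega
      · rcases hks with h | h
        · exact Or.inl (P.inj _ _ hk (by omega) ((hJ' _ hkJ).1 ⟨k, h, rfl⟩))
        · exact Or.inr (P.inj _ _ hk hb' ((hJ' _ hkJ).2.1 ⟨k, h, hk, rfl⟩))
  | succ t hst ih =>
    intro htm
    obtain ⟨a, b, x₁, x₂, F₁, F₂, ha, hb, hbm, hp₁, hp₂, hdis, hx, hmeet⟩ := ih (by omega)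
    by_cases hbt : b = t + 1
    · subst hbt
      obtain ⟨F, hF, hFt⟩ := H.avoid (q (t + 1)) (q 0) (q m)
        (fun e => by have := P.inj 0 (t + 1) (by omega) (by omega) e; omega)
        (fun e => by have := P.inj m (t + 1) (by omega) (by omega) e; omega)
      obtain ⟨x, y, J, hJ, hX, ⟨b', hb', hbm', rfl⟩, -, hJ'⟩ := hF.link
        (fun z => (∃ k, k < s ∧ q k = z) ∨ z ∈ F₁ ∨ (z ∈ F₂ ∧ z ≠ q (t + 1)))
        (fun z => ∃ k, t + 1 < k ∧ k ≤ m ∧ q k = z)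
        (fun z => z = q (t + 1)) (Or.inl ⟨0, by omega, rfl⟩) ⟨m, htm, le_rfl, rfl⟩
        (fun z hz e => hFt (e ▸ hz))
      have hJZ : q (t + 1) ∉ J := fun h => (hJ' _ h).2.2 rfl
      have hJ1 : ∀ z ∈ J, z ∈ F₁ → z = x := fun z hz h => (hJ' z hz).1 (Or.inr (Or.inl h))
      have hJ2 : ∀ z ∈ J, z ∈ F₂ → z = x := fun z hz h =>
        (hJ' z hz).1 (Or.inr (Or.inr ⟨h, fun e => hJZ (e ▸ hz)⟩))
      have hJq : ∀ k, k ≤ m → (k < s ∨ t + 1 < k) → q k ∈ J → q k = x ∨ k = b' := by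
        intro k hk hks hkJ
        rcases hks with h | h
        · exact Or.inl ((hJ' _ hkJ).1 (Or.inl ⟨k, h, rfl⟩))
        · exact Or.inr (P.inj _ _ hk hbm' ((hJ' _ hkJ).2.1 ⟨k, h, hk, rfl⟩))
      have hm1 : ∀ k, k ≤ m → (k < s ∨ t + 1 < k) → q k ∈ F₁ ∪ F₂ → k = a := by
        intro k hk hks hkF
        have := hmeet k hk (by omega) hkF
        omega
      have hext : PS G x₁ (q (t + 1)) (F₁ ∪ {q (t + 1)}) := by
        refine hp₁.join_edge (P.adj t (by omega)) (PS.single _) ?_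
        intro z hz hz'
        rw [mem_singleton] at hz'
        exact hdis z hz (hz' ▸ hp₂.right_mem)
      have hx1 : x ∈ F₁ → x ∉ F₂ := hdis x
      by_cases hxF₁ : x ∈ F₁
      -- the link leaves the first path, so the two paths exchange their roles
      · obtain ⟨A, B, hA, -, hAB, -⟩ := hp₁.split hxF₁
        have hAsub : ∀ z ∈ A, z ∈ F₁ := fun z hz => hAB ▸ mem_union_left _ hz
        refine ⟨a, b', x₂, x₁, F₂, A ∪ J, ha, hb', hbm', hp₂,
          hA.join hJ (fun z hz hz' => hJ1 z hz' (hAsub z hz)), ?_, ?_, ?_⟩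
        · intro z hz hz'
          rw [mem_union] at hz'
          rcases hz' with h | h
          · exact hdis z (hAsub z h) hz
          · exact hx1 hxF₁ (hJ2 z h hz ▸ hz)
        · rcases hx with h | h
          · exact Or.inr ⟨h.2, h.1⟩
          · exact Or.inl ⟨h.2, h.1⟩
        · intro k hk hks hkF
          simp only [mem_union] at hkF
          rcases hkF with h | h | h
          · exact Or.inl (hm1 k hk hks (mem_union_right _ h))
          · exact Or.inl (hm1 k hk hks (mem_union_left _ (hAsub _ h)))
          · rcases hJq k hk hks h with e | e
            · exact Or.inl (hm1 k hk hks (mem_union_left _ (e ▸ hxF₁)))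
            · exact Or.inr e
      · by_cases hxF₂ : x ∈ F₂
        -- the link leaves the second path, and the first one is extended along `q`
        · obtain ⟨A, B, hA, hB, hAB, hAB'⟩ := hp₂.split hxF₂
          have hAsub : ∀ z ∈ A, z ∈ F₂ := fun z hz => hAB ▸ mem_union_left _ hz
          refine ⟨a, b', x₁, x₂, F₁ ∪ {q (t + 1)}, A ∪ J, ha, hb', hbm', hext,
            hA.join hJ (fun z hz hz' => hJ2 z hz' (hAsub z hz)), ?_, hx, ?_⟩
          · intro z hz hz'
            rw [mem_union, mem_singleton] at hz
            rw [mem_union] at hz'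
            rcases hz with hz | rfl
            · rcases hz' with h | h
              · exact hdis z hz (hAsub z h)
              · exact hxF₁ (hJ1 z h hz ▸ hz)
            · rcases hz' with h | h
              · exact hJZ ((hAB' _ h hB.right_mem) ▸ hJ.left_mem)
              · exact hJZ h
          · intro k hk hks hkF
            simp only [mem_union, mem_singleton] at hkF
            rcases hkF with (h | h) | h | h
            · exact Or.inl (hm1 k hk hks (mem_union_left _ h))
            · have := P.inj k (t + 1) hk (by omega) h
              omega
            · exact Or.inl (hm1 k hk hks (mem_union_right _ (hAsub _ h)))
            · rcases hJq k hk hks h with e | e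
              · exact Or.inl (hm1 k hk hks (mem_union_right _ (e ▸ hxF₂)))
              · exact Or.inr e
        -- the link leaves `q` itself and replaces the path that starts at `q a`
        · obtain ⟨a', ha', rfl⟩ : ∃ k, k < s ∧ q k = x := by
            rcases hX with h | h | h
            · exact h
            · exact absurd h hxF₁
            · exact absurd h.1 hxF₂
          have hnew : ∃ F', PS G (q s) (q (t + 1)) F' ∧ q a ∉ F' ∧
              ∀ z ∈ F', z ∈ F₁ ∪ F₂ := by
            rcases hx with ⟨h1, h2⟩ | ⟨h1, h2⟩
            · refine ⟨_, h1 ▸ hext, ?_, ?_⟩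
              · rw [mem_union, mem_singleton, not_or]
                refine ⟨fun h => hdis _ h (h2 ▸ hp₂.left_mem), fun e => ?_⟩
                have := P.inj a (t + 1) (by omega) (by omega) e
                omega
              · intro z hz
                rw [mem_union, mem_singleton] at hz
                rw [mem_union]
                rcases hz with hz | rfl
                · exact Or.inl hz
                · exact Or.inr hp₂.right_mem
            · exact ⟨F₂, h2 ▸ hp₂, fun h => hdis _ (h1 ▸ hp₁.left_mem) h,
                fun z hz => mem_union_right _ hz⟩
          obtain ⟨F', hF', haF', hsub⟩ := hnew
          refine ⟨a', b', q s, q a', F', J, ha', hb', hbm', hF', hJ, ?_, Or.inl ⟨rfl, rfl⟩, ?_⟩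
          · intro z hz hz'
            have := hsub z hz
            rw [mem_union] at this
            rcases this with h | h
            · exact hxF₁ (hJ1 z hz' h ▸ h)
            · exact hxF₂ (hJ2 z hz' h ▸ h)
          · intro k hk hks hkF
            rw [mem_union] at hkF
            rcases hkF with h | h
            · have := hm1 k hk hks (hsub _ h)
              subst this
              exact absurd h haF'
            · rcases hJq k hk hks h with e | e
              · exact Or.inl (P.inj _ _ hk (by omega) e)
              · exact Or.inr e
    · have hnot : q (t + 1) ∉ F₁ ∪ F₂ := by
        intro h
        have := hmeet (t + 1) (by omega) (by omega) h
        omega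
      rw [mem_union, not_or] at hnot
      refine ⟨a, b, x₁, x₂, F₁ ∪ {q (t + 1)}, F₂, ha, by omega, hbm, ?_, hp₂, ?_, hx, ?_⟩
      · refine hp₁.join_edge (P.adj t (by omega)) (PS.single _) ?_
        intro z hz hz'
        rw [mem_singleton] at hz'
        exact hnot.1 (hz' ▸ hz)
      · intro z hz
        rw [mem_union, mem_singleton] at hz
        rcases hz with hz | rfl
        · exact hdis z hz
        · exact hnot.2
      · intro k hk hks hkF
        simp only [mem_union, mem_singleton] at hkF
        rcases hkF with (h | h) | h
        · exact hmeet k hk (by omega) (mem_union_left _ h)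
        · have := P.inj k (t + 1) hk (by omega) h
          omega
        · exact hmeet k hk (by omega) (mem_union_right _ h)

end Longest

/-! ### Pinching a longest path -/

section Pinch

variable [Fintype V] [DecidableEq V] {G : SimpleGraph V} [DecidableRel G.Adj]
variable {d c N : ℕ} {q : ℕ → V} {m : ℕ}

omit [Fintype V] [DecidableEq V] [DecidableRel G.Adj] in
theorem Pth.restrict (P : Pth G q m) {s : ℕ} (hs : s ≤ m) : Pth G q s where
  adj k hk := P.adj k (by omega)
  inj k l hk hl h := P.inj k l (by omega) (by omega) h

theorem Hyp.cover_left (H : Hyp G d c N) {r : ℕ → V} {σ α : ℕ} (P : Pth G r σ) (hα : α < σ)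
    (hσ : G.Adj (r 0) (r σ)) (hN : ∀ w, G.Adj (r 0) w → ∃ k, k ≤ σ ∧ r k = w) :
    ∃ F, PS G (r α) (r σ) F ∧ (∀ z ∈ F, ∃ k, k ≤ σ ∧ r k = z) ∧ d + 1 ≤ F.card := by
  obtain ⟨α', h1, h2, -, h3, h4, h5, -⟩ := H.cover P hα hσ hN
  refine ⟨_, h3, ?_, h5.trans (card_le_card h4)⟩
  intro z hz
  simp only [mem_union, mem_image, Finset.mem_Icc] at hz
  rcases hz with ⟨k, hk, rfl⟩ | ⟨k, hk, rfl⟩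
  · exact ⟨k, by omega, rfl⟩
  · exact ⟨k, by omega, rfl⟩

theorem Hyp.cover_right (H : Hyp G d c N) (P : Pth G q m) {t b : ℕ} (htb : t < b) (hb : b ≤ m)
    (ht : G.Adj (q m) (q t)) (hN : ∀ w, G.Adj (q m) w → ∃ k, t ≤ k ∧ k ≤ m ∧ q k = w) :
    ∃ F, PS G (q b) (q t) F ∧ (∀ z ∈ F, ∃ k, t ≤ k ∧ k ≤ m ∧ q k = z) ∧ d + 1 ≤ F.card := by
  obtain ⟨F, h1, h2, h3⟩ := H.cover_left (P.rev.restrict (Nat.sub_le m t)) (α := m - b) (by omega)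
    (by
      show G.Adj (q (m - 0)) (q (m - (m - t)))
      rwa [Nat.sub_zero, show m - (m - t) = t by omega])
    (by
      intro w hw
      obtain ⟨k, hk, hk', rfl⟩ := hN w (by simpa using hw)
      exact ⟨m - k, by omega, by rw [show m - (m - k) = k by omega]⟩)
  simp only [show m - (m - b) = b by omega, show m - (m - t) = t by omega] at h1
  refine ⟨F, h1, ?_, h3⟩
  intro z hz
  obtain ⟨k, hk, rfl⟩ := h2 z hz
  exact ⟨m - k, by omega, by omega, rfl⟩

/-- On a longest path the last neighbour of the first vertex is the first neighbour of the last
vertex. Otherwise a vine over the section between the two closes the two covering paths to a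
cycle with at least `2 * d + 2` vertices. -/
theorem Hyp.pinch (H : Hyp G d c N) (P : Pth G q m) (hm : m + 1 = N) :
    ∃ s, 1 ≤ s ∧ s < m ∧ G.Adj (q 0) (q s) ∧ G.Adj (q m) (q s) ∧
      (∀ w, G.Adj (q 0) w → ∃ k, k ≤ s ∧ q k = w) ∧
      (∀ w, G.Adj (q m) w → ∃ k, s ≤ k ∧ k ≤ m ∧ q k = w) := by
  have hd : 1 ≤ d := by have := H.hc; have := H.h3; omega
  have hex : ∀ v, ∃ w, G.Adj v w := by
    intro v
    have : 0 < (G.neighborFinset v).card := by have := H.deg v; omega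
    obtain ⟨w, hw⟩ := Finset.card_pos.1 this
    exact ⟨w, by simpa using hw⟩
  have hnb0 := fun w => H.nbr_path P hm (w := w)
  have hnbm : ∀ w, G.Adj (q m) w → ∃ k, k < m ∧ q k = w := by
    intro w hw
    obtain ⟨k, hk, hk', rfl⟩ := H.nbr_path P.rev hm (w := w) (by simpa using hw)
    exact ⟨m - k, by omega, rfl⟩
  obtain ⟨s, hs1, hsm, hs, hsN⟩ : ∃ s, 1 ≤ s ∧ s ≤ m ∧ G.Adj (q 0) (q s) ∧
      ∀ w, G.Adj (q 0) w → ∃ k, k ≤ s ∧ q k = w := by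
    obtain ⟨w, hw⟩ := hex (q 0)
    obtain ⟨k, hk, hkm, rfl⟩ := hnb0 w hw
    have h1 := Nat.findGreatest_spec (P := fun k => G.Adj (q 0) (q k)) hkm hw
    refine ⟨Nat.findGreatest (fun k => G.Adj (q 0) (q k)) m, ?_, Nat.findGreatest_le m, h1, ?_⟩
    · by_contra h
      rw [show Nat.findGreatest (fun k => G.Adj (q 0) (q k)) m = 0 by omega] at h1
      exact h1.ne rfl
    · intro w hw
      obtain ⟨l, hl, hlm, rfl⟩ := hnb0 w hw
      exact ⟨l, Nat.le_findGreatest (P := fun k => G.Adj (q 0) (q k)) hlm hw, rfl⟩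
  obtain ⟨t, htm, ht, htN⟩ : ∃ t, t < m ∧ G.Adj (q m) (q t) ∧
      ∀ w, G.Adj (q m) w → ∃ k, t ≤ k ∧ k ≤ m ∧ q k = w := by
    have hext : ∃ k, k < m ∧ G.Adj (q m) (q k) := by
      obtain ⟨w, hw⟩ := hex (q m)
      obtain ⟨k, hk, rfl⟩ := hnbm w hw
      exact ⟨k, hk, hw⟩
    refine ⟨Nat.find hext, (Nat.find_spec hext).1, (Nat.find_spec hext).2, ?_⟩
    intro w hw
    obtain ⟨k, hk, rfl⟩ := hnbm w hw
    exact ⟨k, Nat.find_min' hext ⟨hk, hw⟩, hk.le, rfl⟩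
  have hst := H.noncross P hm hsm htm.le hs ht
  rcases hst.eq_or_lt with rfl | hst
  · exact ⟨s, hs1, htm, hs, ht, hsN, htN⟩
  exfalso
  obtain ⟨a, b, x₁, x₂, F₁, F₂, ha, hb, hbm, hp₁, hp₂, hdis, hx, hmeet⟩ :=
    H.vine P hs1 t hst.le htm
  obtain ⟨FL, hL, hLsub, hLc⟩ := H.cover_left (P.restrict hsm) ha hs hsN
  obtain ⟨FR, hR, hRsub, hRc⟩ := H.cover_right P hb hbm ht htN
  have hLR : ∀ z ∈ FL, z ∉ FR := by
    intro z hz hz'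
    obtain ⟨k, hk, rfl⟩ := hLsub z hz
    obtain ⟨l, hl, hl', e⟩ := hRsub _ hz'
    have := P.inj l k hl' (by omega) e
    omega
  have h1R : ∀ z ∈ F₁, z ∈ FR → z = q t := by
    intro z hz hz'
    obtain ⟨k, hk, hkm, rfl⟩ := hRsub z hz'
    rcases hk.eq_or_lt with rfl | hk
    · rfl
    · rcases hmeet k hkm (Or.inr hk) (mem_union_left _ hz) with rfl | rfl
      · omega
      · exact absurd hp₂.right_mem (hdis _ hz)
  have h2R : ∀ z ∈ F₂, z ∈ FR → z = q b := by
    intro z hz hz'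
    obtain ⟨k, hk, hkm, rfl⟩ := hRsub z hz'
    rcases hk.eq_or_lt with rfl | hk
    · exact absurd hz (hdis _ hp₁.right_mem)
    · rcases hmeet k hkm (Or.inr hk) (mem_union_right _ hz) with rfl | rfl
      · omega
      · rfl
  have hp := (hp₁.join hR.symm h1R).join hp₂.symm (by
    intro z hz hz'
    rcases mem_union.1 hz with h | h
    · exact absurd hz' (hdis z h)
    · exact h2R z hz' h)
  have hLm : ∀ z ∈ F₁ ∪ FR ∪ F₂, z ∈ FL → z = q a ∨ z = q s := by
    intro z hz hz'
    obtain ⟨k, hk, rfl⟩ := hLsub z hz'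
    have hz2 : q k ∈ F₁ ∪ F₂ := by
      simp only [mem_union] at hz ⊢
      rcases hz with (h | h) | h
      · exact Or.inl h
      · exact absurd h (hLR _ hz')
      · exact Or.inr h
    rcases hk.eq_or_lt with rfl | hk
    · exact Or.inr rfl
    · rcases hmeet k (by omega) (Or.inl hk) hz2 with rfl | rfl
      · exact Or.inl rfl
      · omega
  have hcard : 2 * d + 2 ≤ (F₁ ∪ FR ∪ F₂ ∪ FL).card := by
    have h1 : FL ∪ FR ⊆ F₁ ∪ FR ∪ F₂ ∪ FL := by
      intro z hz
      simp only [mem_union] at hz ⊢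
      tauto
    have h2 := card_le_card h1
    rw [card_union_of_disjoint (Finset.disjoint_left.2 hLR)] at h2
    omega
  have hne : q a ≠ q s := fun e => by
    have := P.inj a s (by omega) hsm e
    omega
  have hc := H.hc
  rcases hx with ⟨rfl, rfl⟩ | ⟨rfl, rfl⟩
  · have := H.cyc2 hp hL.symm hne.symm (fun z hz hz' => (hLm z hz hz').symm) (by omega)
    omega
  · have := H.cyc2 hp hL hne hLm (by omega)
    omega

end Pinch

/-! ### Rotations of the pinched section -/

/-- The sequence `r` with its first `j` terms reversed. -/
def rot (j : ℕ) (r : ℕ → V) (k : ℕ) : V := if k < j then r (j - 1 - k) else r k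

theorem rot_lt {r : ℕ → V} {j k : ℕ} (h : k < j) : rot j r k = r (j - 1 - k) := if_pos h

theorem rot_ge {r : ℕ → V} {j k : ℕ} (h : j ≤ k) : rot j r k = r k := if_neg (by omega)

/-- `r` runs through the first `s + 1` vertices of `q` along a path that, like `q`, has `q s` as
its vertex of index `s`. -/
structure Cov (G : SimpleGraph V) (q : ℕ → V) (s : ℕ) (r : ℕ → V) : Prop where
  pth : Pth G r s
  last : r s = q s
  mem : ∀ w, (∃ k, k ≤ s ∧ q k = w) ↔ ∃ k, k ≤ s ∧ r k = w

theorem Cov.rot {G : SimpleGraph V} {q r : ℕ → V} {s j : ℕ} (C : Cov G q s r)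
    (hj : j ≤ s) (h : G.Adj (r 0) (r j)) : Cov G q s (rot j r) where
  pth := by
    refine ⟨fun k hk => ?_, fun k l hk hl e => ?_⟩
    · rcases lt_trichotomy (k + 1) j with hkj | hkj | hkj
      · rw [rot_lt hkj, rot_lt (by omega)]
        have := C.pth.adj (j - 1 - (k + 1)) (by omega)
        rw [show j - 1 - (k + 1) + 1 = j - 1 - k by omega] at this
        exact this.symm
      · rw [rot_lt (by omega), rot_ge hkj.ge, show j - 1 - k = 0 by omega, hkj]
        exact h
      · rw [rot_ge (by omega), rot_ge hkj.le]
        exact C.pth.adj k hk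
    · by_cases hkj : k < j <;> by_cases hlj : l < j
      · rw [rot_lt hkj, rot_lt hlj] at e
        have := C.pth.inj _ _ (by omega) (by omega) e
        omega
      · rw [rot_lt hkj, rot_ge (by omega)] at e
        have := C.pth.inj _ _ (by omega) (by omega) e
        omega
      · rw [rot_ge (by omega), rot_lt hlj] at e
        have := C.pth.inj _ _ (by omega) (by omega) e
        omega
      · rw [rot_ge (by omega), rot_ge (by omega)] at e
        exact C.pth.inj _ _ (by omega) (by omega) e
  last := by rw [rot_ge hj, C.last]
  mem w := by
    rw [C.mem]
    constructor
    · rintro ⟨k, hk, rfl⟩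
      by_cases hkj : k < j
      · exact ⟨j - 1 - k, by omega, by
          rw [rot_lt (by omega), show j - 1 - (j - 1 - k) = k by omega]⟩
      · exact ⟨k, hk, rot_ge (by omega)⟩
    · rintro ⟨k, hk, rfl⟩
      by_cases hkj : k < j
      · exact ⟨j - 1 - k, by omega, (rot_lt hkj).symm⟩
      · exact ⟨k, hk, (rot_ge (by omega)).symm⟩

section Pinched

variable [Fintype V] [DecidableEq V] {G : SimpleGraph V} [DecidableRel G.Adj]
variable {d c N : ℕ} {q r : ℕ → V} {m s : ℕ}

/-- Replacing the section before a pinch vertex by another path through the same vertices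
gives a longest path again, and the pinch vertex stays the same. -/
theorem Hyp.cov_pinch (H : Hyp G d c N) (P : Pth G q m) (hm : m + 1 = N) (hsm : s < m)
    (hs : G.Adj (q m) (q s)) (hN : ∀ w, G.Adj (q m) w → ∃ k, s ≤ k ∧ k ≤ m ∧ q k = w)
    (C : Cov G q s r) :
    G.Adj (r 0) (r s) ∧ ∀ w, G.Adj (r 0) w → ∃ k, k ≤ s ∧ r k = w := by
  obtain ⟨f, hf1, hf2⟩ : ∃ f : ℕ → V, (∀ k, k ≤ s → f k = r k) ∧ ∀ k, s ≤ k → f k = q k := by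
    refine ⟨fun k => if k ≤ s then r k else q k, fun k hk => if_pos hk, fun k hk => ?_⟩
    rcases hk.eq_or_lt with rfl | hk
    · exact (if_pos le_rfl).trans C.last
    · exact if_neg (by omega)
  have hrq : ∀ k, k ≤ s → ∃ l, l ≤ s ∧ q l = r k := fun k hk => (C.mem _).2 ⟨k, hk, rfl⟩
  have Pf : Pth G f m := by
    refine ⟨fun k hk => ?_, fun k l hk hl e => ?_⟩
    · by_cases h : k < s
      · rw [hf1 k h.le, hf1 (k + 1) h]
        exact C.pth.adj k h
      · rw [hf2 k (by omega), hf2 (k + 1) (by omega)]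
        exact P.adj k hk
    · by_cases hks : k ≤ s <;> by_cases hls : l ≤ s
      · rw [hf1 k hks, hf1 l hls] at e
        exact C.pth.inj k l hks hls e
      · rw [hf1 k hks, hf2 l (by omega)] at e
        obtain ⟨i, hi, hi'⟩ := hrq k hks
        have := P.inj i l (by omega) hl (hi'.trans e)
        omega
      · rw [hf2 k (by omega), hf1 l hls] at e
        obtain ⟨i, hi, hi'⟩ := hrq l hls
        have := P.inj i k (by omega) hk (hi'.trans e.symm)
        omega
      · rw [hf2 k (by omega), hf2 l (by omega)] at e
        exact P.inj k l hk hl e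
  obtain ⟨s', -, hs'm, h0, h1, h2, h3⟩ := H.pinch Pf hm
  rw [hf1 0 (Nat.zero_le s)] at h0 h2
  rw [hf2 m hsm.le] at h1 h3
  obtain ⟨k, hk, hkm, e⟩ := h3 _ hs
  rw [← hf2 s le_rfl] at e
  have hk' := Pf.inj k s hkm hsm.le e
  obtain ⟨l, hl, hlm, e'⟩ := hN _ h1
  have hs's : s' ≤ s := by omega
  rw [← hf2 l hl] at e'
  have := Pf.inj l s' hlm (by omega) e'
  obtain rfl : s' = s := by omega
  rw [hf1 s' le_rfl] at h0
  refine ⟨h0, fun w hw => ?_⟩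
  obtain ⟨k, hk, rfl⟩ := h2 w hw
  exact ⟨k, hk, (hf1 k hk).symm⟩

/-- Every path through the section `q 0, …, q s` that ends in `q s` starts in a vertex that is
adjacent to `q s` and has no neighbour outside the section. Moreover a path `E` with at least
`d + 2` vertices leads from a vertex `y` of the section to `q s` outside the section. -/
structure Pinched (G : SimpleGraph V) (d : ℕ) (q : ℕ → V) (s : ℕ) (y : V) (E : Finset V) :
    Prop where
  cov : ∀ r, Cov G q s r → G.Adj (r 0) (r s) ∧ ∀ w, G.Adj (r 0) w → ∃ k, k ≤ s ∧ r k = w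
  path : PS G y (q s) E
  card : d + 2 ≤ E.card
  meet : ∀ k, k ≤ s → q k ∈ E → q k = y ∨ q k = q s
  mem : ∃ a, a < s ∧ q a = y
  out : ∃ y', G.Adj y y' ∧ ∀ k, k ≤ s → q k ≠ y'
  pth : Pth G q s

variable {y : V} {E : Finset V}

omit [Fintype V] [DecidableRel G.Adj] in
theorem Pinched.ne (D : Pinched G d q s y E) (C : Cov G q s r) : r 0 ≠ y := by
  intro e
  obtain ⟨y', h, h'⟩ := D.out
  obtain ⟨k, hk, hk'⟩ := (C.mem y').2 ((D.cov r C).2 y' (e ▸ h))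
  exact absurd hk' (h' k hk)

/-- The cycle through `E` and the covering path that starts in `y` is so long that the first
vertex of `r` is adjacent to everything on the covering path. -/
theorem Pinched.exact (H : Hyp G d c N) (D : Pinched G d q s y E) (C : Cov G q s r) :
    ∃ α α', r α = y ∧ 1 ≤ α ∧ α < α' ∧ α' ≤ s ∧ α + 1 + (s + 1 - α') = d + 1 ∧
      ∀ k, 1 ≤ k → k ≤ s → (G.Adj (r 0) (r k) ↔ k ≤ α ∨ α' ≤ k) := by
  obtain ⟨a, ha, hay⟩ := D.mem
  obtain ⟨α, hα, hαy⟩ := (C.mem y).1 ⟨a, ha.le, hay⟩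
  have hαs : α < s := by
    refine lt_of_le_of_ne hα fun e => ?_
    rw [e, C.last, ← hay] at hαy
    have := D.pth.inj _ _ le_rfl ha.le hαy
    omega
  have hα1 : 1 ≤ α := by
    rw [Nat.one_le_iff_ne_zero]
    rintro rfl
    exact D.ne C hαy
  obtain ⟨hz, hnb⟩ := D.cov r C
  obtain ⟨α', h1, h2, h3, h4, h5, h6, h7⟩ := H.cover C.pth hαs hz hnb
  generalize hF : (Finset.Icc 0 α).image r ∪ (Finset.Icc α' s).image r = F at h4 h5 h7
  have hmem : ∀ k, k ≤ s → (r k ∈ F ↔ k ≤ α ∨ α' ≤ k) := by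
    intro k hk
    rw [← hF, mem_union, C.pth.mem_arc hα hk, C.pth.mem_arc le_rfl hk]
    omega
  have hFE : ∀ z ∈ F, z ∈ E → z = y ∨ z = q s := by
    intro z hz hz'
    have : ∃ k, k ≤ s ∧ r k = z := by
      simp only [← hF, mem_union, mem_image, Finset.mem_Icc] at hz
      rcases hz with ⟨k, hk, e⟩ | ⟨k, hk, e⟩
      · exact ⟨k, by omega, e⟩
      · exact ⟨k, by omega, e⟩
    obtain ⟨k, hk, rfl⟩ := (C.mem z).2 this
    exact D.meet k hk hz'
  have hne : y ≠ q s := fun e => by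
    have := D.pth.inj _ _ ha.le le_rfl (hay.trans e)
    omega
  rw [hαy, C.last] at h4
  have hEc := D.card
  have hcard : F.card + E.card ≤ (F ∪ E).card + 2 := by
    have h : F ∩ E ⊆ {y, q s} := by
      intro z hz
      rw [mem_inter] at hz
      rw [mem_insert, mem_singleton]
      exact hFE z hz.1 hz.2
    have h' := card_le_card h
    have := card_le_two (a := y) (b := q s)
    have := card_union_add_card_inter F E
    omega
  have hd : 1 ≤ d := by have := H.hc; have := H.h3; omega
  have hEle := card_le_card (subset_union_right (s₁ := F) (s₂ := E))
  have hcyc := H.cyc2 h4 D.path hne hFE (by omega)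
  have hc := H.hc
  have heq := eq_of_subset_of_card_le h5 (by omega)
  refine ⟨α, α', hαy, hα1, h1, h2, ?_, fun k hk hks => ?_⟩
  · rw [heq] at h6
    omega
  · rw [← hmem k hks, ← heq, mem_insert, mem_neighborFinset]
    constructor
    · exact Or.inr
    · rintro (e | h)
      · have := C.pth.inj k 0 hks (Nat.zero_le s) e
        omega
      · exact h

/-- In every covering path `y` has index `d - 1`, and the first vertex is adjacent exactly to the
vertices up to `y` and to `q s`; any other pattern leads by rotations to a covering path that
starts in `y`. -/
theorem Pinched.shape (H : Hyp G d c N) (D : Pinched G d q s y E) (C : Cov G q s r) :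
    r (d - 1) = y ∧ 1 ≤ d - 1 ∧ d + 1 ≤ s ∧
      ∀ k, 1 ≤ k → k ≤ s → (G.Adj (r 0) (r k) ↔ k ≤ d - 1 ∨ k = s) := by
  obtain ⟨α, α', hy, h1, h2, h3, h4, h5⟩ := D.exact H C
  have h6 : α + 2 ≤ α' := by
    by_contra hcon
    refine D.ne (C.rot (j := α + 1) (by omega)
      ((h5 _ (by omega) (by omega)).2 (Or.inr (by omega)))) ?_
    rw [rot_lt (by omega), ← hy]
    rfl
  have h7 : α' = s := by
    by_contra hcon
    have C1 := C.rot (j := α) (by omega) ((h5 α h1 (by omega)).2 (Or.inl le_rfl))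
    obtain ⟨β, β', g0, -, -, g3, g4, g5⟩ := D.exact H C1
    have hb : rot α r α = rot α r β := by rw [g0, rot_ge le_rfl, hy]
    have hβ := C1.pth.inj _ _ (by omega) (by omega) hb
    have hadj := (g5 α' (by omega) h3).2 (Or.inr (by omega))
    rw [rot_lt (by omega), rot_ge (by omega)] at hadj
    have C2 := C.rot (j := α' + 1) (by omega)
      ((h5 _ (by omega) (by omega)).2 (Or.inr (by omega)))
    have C3 := C2.rot (j := α' - α + 1) (by omega) (by
      rw [rot_lt (by omega), rot_lt (by omega),
        show α' + 1 - 1 - 0 = α' by omega,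
        show α' + 1 - 1 - (α' - α + 1) = α - 1 - 0 by omega]
      exact hadj.symm)
    refine D.ne C3 ?_
    rw [rot_lt (by omega), rot_lt (by omega), ← hy]
    congr 1
    omega
  obtain rfl : α = d - 1 := by omega
  refine ⟨hy, h1, by omega, fun k hk hks => ?_⟩
  rw [h5 k hk hks]
  omega

/-- The `d - 1` vertices before `y` are adjacent only to each other, to `y` and to `q s`, since
each of them starts a covering path with the same first `d - 1` vertices. -/
theorem Pinched.closed (H : Hyp G d c N) (D : Pinched G d q s y E) (C : Cov G q s r) {i : ℕ}
    (hi : i < d - 1) {w : V} (hw : G.Adj (r i) w) :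
    (∃ k, k < d - 1 ∧ r k = w) ∨ w = y ∨ w = q s := by
  obtain ⟨hy, h1, h2, h3⟩ := D.shape H C
  have C1 := C.rot (j := d - 1) (by omega) ((h3 (d - 1) h1 (by omega)).2 (Or.inl le_rfl))
  obtain ⟨-, -, -, g3⟩ := D.shape H C1
  have C2 := C1.rot (j := d - 1 - i) (by omega)
    ((g3 _ (by omega) (by omega)).2 (Or.inl (by omega)))
  obtain ⟨k0, -, -, k3⟩ := D.shape H C2
  have e : rot (d - 1 - i) (rot (d - 1) r) 0 = r i := by
    rw [rot_lt (by omega), rot_lt (by omega)]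
    congr 1
    omega
  rw [← e] at hw
  obtain ⟨k, hk, rfl⟩ := (D.cov _ C2).2 w hw
  have hk0 : 1 ≤ k := by
    rw [Nat.one_le_iff_ne_zero]
    rintro rfl
    exact hw.ne rfl
  rcases (k3 k hk0 hk).1 hw with hkd | rfl
  · rcases hkd.eq_or_lt with rfl | hkd
    · exact Or.inr (Or.inl k0)
    · left
      by_cases hki : k < d - 1 - i
      · rw [rot_lt hki, rot_lt (by omega)]
        exact ⟨_, by omega, rfl⟩
      · rw [rot_ge (by omega), rot_lt hkd]
        exact ⟨_, by omega, rfl⟩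
  · exact Or.inr (Or.inr C2.last)

/-- After deleting `y` and `q s`, a pinched section falls apart into two sets of `d - 1` vertices,
which are cut off from each other and from any vertex `v` outside the section. At least three
components remain, against toughness. -/
theorem Pinched.false (H : Hyp G d c N) (D : Pinched G d q s y E) {v : V}
    (hv : ∀ k, k ≤ s → q k ≠ v) : False := by
  have C : Cov G q s q := ⟨D.pth, rfl, fun w => Iff.rfl⟩
  obtain ⟨hy, h1, h2, h3⟩ := D.shape H C
  have C' := C.rot (j := s) le_rfl ((h3 s (by omega) le_rfl).2 (Or.inr rfl))
  obtain ⟨hy', -, -, -⟩ := D.shape H C'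
  rw [rot_lt (by omega), ← hy] at hy'
  have hsd := D.pth.inj _ _ (by omega) (by omega) hy'
  have hne : ∀ {k l : ℕ}, k ≤ s → l ≤ s → k ≠ l → q k ≠ q l :=
    fun hk hl h e => h (D.pth.inj _ _ hk hl e)
  have hout : ∀ k, k < d - 1 → rot s q k = q (s - 1 - k) := fun k hk => rot_lt (by omega)
  refine tough_count H.tough {q (d - 1), q s} {q 0, q (s - 1), v} ?_ ?_ ?_ ?_
  · rw [card_eq_three.2 ⟨q 0, q (s - 1), v, hne (by omega) (by omega) (by omega),
      hv 0 (by omega), hv (s - 1) (by omega), rfl⟩]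
    have := card_le_two (a := q (d - 1)) (b := q s)
    omega
  · rw [card_eq_three.2 ⟨q 0, q (s - 1), v, hne (by omega) (by omega) (by omega),
      hv 0 (by omega), hv (s - 1) (by omega), rfl⟩]
    omega
  · intro x hx
    simp only [mem_insert, mem_singleton, not_or] at hx ⊢
    rcases hx with rfl | rfl | rfl
    · exact ⟨hne (by omega) (by omega) (by omega), hne (by omega) (by omega) (by omega)⟩
    · exact ⟨hne (by omega) (by omega) (by omega), hne (by omega) (by omega) (by omega)⟩
    · exact ⟨(hv (d - 1) (by omega)).symm, (hv s le_rfl).symm⟩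
  · have hW : ∀ f, Cov G q s f → ∀ u w, (∃ k, k < d - 1 ∧ f k = u) →
        w ∉ ({q (d - 1), q s} : Finset V) → G.Adj u w → ∃ k, k < d - 1 ∧ f k = w := by
      rintro f Cf u w ⟨k, hk, rfl⟩ hw huw
      rw [mem_insert, mem_singleton, hy] at hw
      exact (D.closed H Cf hk huw).resolve_right hw
    have a0 : ∃ k, k < d - 1 ∧ q k = q 0 := ⟨0, h1, rfl⟩
    have a1 : ¬ ∃ k, k < d - 1 ∧ q k = q (s - 1) := by
      rintro ⟨k, hk, e⟩
      exact hne (by omega) (by omega) (by omega) e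
    have a2 : ¬ ∃ k, k < d - 1 ∧ q k = v := by
      rintro ⟨k, hk, e⟩
      exact hv k (by omega) e
    have b1 : ∃ k, k < d - 1 ∧ rot s q k = q (s - 1) := ⟨0, h1, by rw [hout 0 h1]; rfl⟩
    have b2 : ¬ ∃ k, k < d - 1 ∧ rot s q k = v := by
      rintro ⟨k, hk, e⟩
      rw [hout k hk] at e
      exact hv _ (by omega) e
    intro x hx x' hx' hxx
    simp only [mem_insert, mem_singleton] at hx hx'
    rcases hx with rfl | rfl | rfl <;> rcases hx' with rfl | rfl | rfl
    · exact absurd rfl hxx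
    · exact ⟨_, hW q C, Or.inl ⟨a0, a1⟩⟩
    · exact ⟨_, hW q C, Or.inl ⟨a0, a2⟩⟩
    · exact ⟨_, hW q C, Or.inr ⟨a0, a1⟩⟩
    · exact absurd rfl hxx
    · exact ⟨_, hW _ C', Or.inl ⟨b1, b2⟩⟩
    · exact ⟨_, hW q C, Or.inr ⟨a0, a2⟩⟩
    · exact ⟨_, hW _ C', Or.inr ⟨b1, b2⟩⟩
    · exact absurd rfl hxx

/-- The assumptions are contradictory: the pinch vertex of a longest path does not separate the
graph, so a path leads around it, which makes the section before it a pinched one. -/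
theorem Hyp.false (H : Hyp G d c N) (P : Pth G q m) (hm : m + 1 = N) : False := by
  obtain ⟨s, hs1, hsm, h0, h1, h2, h3⟩ := H.pinch P hm
  have hne : ∀ {k l : ℕ}, k ≤ m → l ≤ m → k ≠ l → q k ≠ q l :=
    fun hk hl h e => h (P.inj _ _ hk hl e)
  obtain ⟨F, hF, hFs⟩ := H.avoid (q s) (q 0) (q m)
    (hne (by omega) (by omega) (by omega)) (hne (by omega) (by omega) (by omega))
  obtain ⟨x, y, J, hJ, ⟨a, ha, rfl⟩, ⟨b, hb, hbm, rfl⟩, -, hJ'⟩ := hF.link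
    (fun z => ∃ k, k < s ∧ q k = z) (fun z => ∃ k, s < k ∧ k ≤ m ∧ q k = z)
    (fun z => z = q s) ⟨0, by omega, rfl⟩ ⟨m, hsm, le_rfl, rfl⟩ (fun z hz e => hFs (e ▸ hz))
  obtain ⟨FR, hR, hRsub, hRc⟩ := H.cover_right P hb hbm h1 h3
  have haR : q a ∉ FR := by
    intro h
    obtain ⟨k, hk, hkm, e⟩ := hRsub _ h
    exact hne hkm (by omega) (by omega) e
  have hJA : ∀ k, k ≤ s → q k ∈ J → q k = q a := by
    intro k hk hkJ
    rcases hk.eq_or_lt with rfl | hk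
    · exact absurd rfl (hJ' _ hkJ).2.2
    · exact (hJ' _ hkJ).1 ⟨k, hk, rfl⟩
  have hE : PS G (q a) (q s) (J ∪ FR) := by
    refine hJ.join hR fun z hz hz' => ?_
    obtain ⟨k, hk, hkm, rfl⟩ := hRsub z hz'
    rcases hk.eq_or_lt with rfl | hk
    · exact absurd rfl (hJ' _ hz).2.2
    · exact (hJ' _ hz).2.1 ⟨k, hk, hkm, rfl⟩
  refine Pinched.false H (q := q) (s := s) (y := q a) (E := J ∪ FR) (v := q m)
    ⟨fun r C => H.cov_pinch P hm hsm h1 h3 C, hE, ?_, ?_, ⟨a, ha, rfl⟩, ?_, P.restrict hsm.le⟩ ?_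
  · have h : insert (q a) FR ⊆ J ∪ FR := by
      intro z hz
      rw [mem_insert] at hz
      rw [mem_union]
      rcases hz with rfl | hz
      · exact Or.inl hJ.left_mem
      · exact Or.inr hz
    have := card_le_card h
    rw [card_insert_of_notMem haR] at this
    omega
  · intro k hk hkE
    rcases mem_union.1 hkE with h | h
    · exact Or.inl (hJA k hk h)
    · obtain ⟨l, hl, hlm, e⟩ := hRsub _ h
      have := P.inj l k hlm (by omega) e
      right
      congr 1
      omega
  · obtain ⟨w, hw, hp⟩ := hJ.tail (hne (by omega) hbm (by omega))
    refine ⟨w, hw, fun k hk e => hw.ne ?_⟩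
    have hwJ : q k ∈ J := e ▸ (mem_erase.1 hp.left_mem).2
    rw [← hJA k hk hwJ, e]
  · intro k hk
    exact hne (by omega) le_rfl (by omega)

end Pinched

/-! ### The given cycle -/

section Assembly

variable [Fintype V] [DecidableEq V] {G : SimpleGraph V}

omit [Fintype V] in
/-- The sequence of vertices of a cycle, read as a path that ends in a prescribed vertex. -/
theorem PS.of_cycle {u x : V} (w : G.Walk u u) (hw : w.IsCycle) (hx : x ∈ w.support) :
    ∃ v F, PS G v x F ∧ F.card = w.length ∧ ∀ z, z ∈ F ↔ z ∈ w.support := by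
  have h1 := hw.rotate hx
  have h2 : (w.rotate x hx).length = w.length := w.length_rotate x hx
  have h3 : ∀ z, z ∈ (w.rotate x hx).support ↔ z ∈ w.support :=
    fun z => w.mem_support_rotate_iff x hx
  generalize w.rotate x hx = w' at h1 h2 h3
  cases w' with
  | nil => exact absurd rfl h1.ne_nil
  | @cons _ v _ h p =>
    rw [Walk.cons_isCycle_iff] at h1
    refine ⟨v, p.support.toFinset, PS.of_walk p h1.1, ?_, fun z => ?_⟩
    · rw [List.toFinset_card_of_nodup h1.1.support_nodup, Walk.length_support, ← h2,
        Walk.length_cons]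
    · rw [← h3, Walk.support_cons, List.mem_cons, List.mem_toFinset]
      constructor
      · exact Or.inr
      · rintro (rfl | h)
        · exact p.end_mem_support
        · exact h

/-- A 1-tough graph has no cut vertex. -/
theorem avoid_of_tough (ht : OneTough G) {v x y : V} (hx : x ≠ v) (hy : y ≠ v) :
    ∃ F, PS G x y F ∧ v ∉ F := by
  by_contra hcon
  have hx0 : ∃ F, PS G x x F ∧ v ∉ F := ⟨{x}, PS.single x, by simpa using hx.symm⟩
  have hxy : x ≠ y := by
    rintro rfl
    exact hcon hx0
  have hc : ({x, y} : Finset V).card = 2 := card_pair hxy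
  have hW : ∀ u w, (∃ F, PS G x u F ∧ v ∉ F) → w ∉ ({v} : Finset V) → G.Adj u w →
      ∃ F, PS G x w F ∧ v ∉ F := by
    rintro u w ⟨F, hF, hvF⟩ hw huw
    by_cases hwF : w ∈ F
    · obtain ⟨F₁, F₂, h1, -, h2, -⟩ := hF.split hwF
      exact ⟨F₁, h1, fun h => hvF (h2 ▸ mem_union_left _ h)⟩
    · refine ⟨F ∪ {w}, hF.join_edge huw (PS.single w) ?_, ?_⟩
      · intro z hz hz'
        rw [mem_singleton] at hz'
        exact hwF (hz' ▸ hz)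
      · rw [mem_union, not_or]
        refine ⟨hvF, fun h => hw ?_⟩
        rw [mem_singleton] at h ⊢
        exact h.symm
  refine tough_count ht {v} {x, y} (by rw [hc, card_singleton]) hc.ge ?_ ?_
  · intro z hz
    simp only [mem_insert, mem_singleton] at hz ⊢
    rcases hz with rfl | rfl <;> assumption
  · intro z hz z' hz' hne
    simp only [mem_insert, mem_singleton] at hz hz'
    refine ⟨fun u => ∃ F, PS G x u F ∧ v ∉ F, hW, ?_⟩
    rcases hz with rfl | rfl <;> rcases hz' with rfl | rfl
    · exact absurd rfl hne
    · exact Or.inl ⟨hx0, hcon⟩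
    · exact Or.inr ⟨hx0, hcon⟩
    · exact absurd rfl hne

/-- A longest cycle that is not dominating has at least `2 * δ + 2` vertices. -/
theorem long_of_not_dominating [DecidableRel G.Adj] (ht : OneTough G) {u : V} {w : G.Walk u u}
    (hw : IsLongestCycle w) {a b : V} (hab : G.Adj a b) (ha : a ∉ w.support)
    (hb : b ∉ w.support) : 2 * G.minDegree + 2 ≤ w.length := by
  classical
  by_contra hlt
  have hbound : ∀ {x y : V} {F : Finset V}, PS G x y F → F.card ≤ Fintype.card V :=
    fun _ => card_le_univ _
  -- go round the cycle, then along a link to `b`, and finish with the edge from `b` to `a`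
  obtain ⟨x₀, y₀, F₀, h₀, hc₀⟩ : ∃ x y F, PS G x y F ∧ w.length + 2 ≤ F.card := by
    obtain ⟨F, hF, haF⟩ := avoid_of_tough ht (v := a) (x := u) (y := b)
      (fun e => ha (e ▸ w.start_mem_support)) hab.ne'
    obtain ⟨x, y, J, hJ, hx, rfl, -, hJ'⟩ := hF.link (fun z => z ∈ w.support) (fun z => z = b)
      (fun z => z = a) w.start_mem_support rfl (fun z hz e => haF (e ▸ hz))
    obtain ⟨v, D, hD, hDc, hDm⟩ := PS.of_cycle w hw.1 hx
    have h1 := hD.join hJ (fun z hz hz' => (hJ' z hz').1 ((hDm z).1 hz))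
    have haU : a ∉ D ∪ J := by
      rw [mem_union, not_or]
      exact ⟨fun h => ha ((hDm a).1 h), fun h => (hJ' a h).2.2 rfl⟩
    refine ⟨_, _, _, PS.cons hab h1.symm haU, ?_⟩
    rw [card_insert_of_notMem haU]
    have h2 : insert y D ⊆ D ∪ J := by
      intro z hz
      rw [mem_insert] at hz
      rw [mem_union]
      rcases hz with rfl | hz
      · exact Or.inr hJ.right_mem
      · exact Or.inl hz
    have := card_le_card h2
    rw [card_insert_of_notMem (fun h => hb ((hDm y).1 h))] at this
    omega
  let p : ℕ → Prop := fun n => ∃ x y F, PS G x y F ∧ F.card = n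
  have hN : ∀ {x y : V} {F : Finset V}, PS G x y F → F.card ≤ Nat.findGreatest p (Fintype.card V) :=
    fun h => Nat.le_findGreatest (hbound h) ⟨_, _, _, h, rfl⟩
  obtain ⟨x, y, F, hF, hFc⟩ : p (Nat.findGreatest p (Fintype.card V)) :=
    Nat.findGreatest_spec (hbound h₀) ⟨_, _, _, h₀, rfl⟩
  have H : Hyp G G.minDegree w.length (Nat.findGreatest p (Fintype.card V)) :=
    { deg := fun v => by
        rw [card_neighborFinset_eq_degree]
        exact G.minDegree_le_degree v
      cyc := fun x y F h hadj h3 => by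
        obtain ⟨e, he, hel⟩ := h.close hadj h3
        exact hel ▸ hw.2 _ e he
      path := fun x y F h => hN h
      hN := hc₀.trans (hN h₀)
      hc := by omega
      h3 := hw.1.three_le_length
      avoid := fun v x y hx hy => avoid_of_tough ht hx hy
      tough := ht }
  obtain ⟨q, -, -, hadj, hinj, -⟩ := hF.to_fun
  have hpos := hF.card_pos
  exact H.false (q := q) (m := F.card - 1)
    ⟨fun k hk => hadj k (by omega), fun k l hk hl => hinj k l (by omega) (by omega)⟩
    (by rw [← hFc]; omega)

omit [DecidableEq V] in
/-- The edge `a b` alone gives the lower bound on the length. -/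
theorem exists_longestPathOutside {u a b : V} (w : G.Walk u u) (hab : G.Adj a b)
    (ha : a ∉ w.support) (hb : b ∉ w.support) :
    ∃ (x y : V) (P : G.Walk x y), IsLongestPathOutside w P ∧ 1 ≤ P.length := by
  classical
  let p : ℕ → Prop := fun n => ∃ (x y : V) (P : G.Walk x y),
    P.IsPath ∧ AvoidsCycle w P ∧ P.length = n
  have hbound : ∀ {x y : V} (P : G.Walk x y), P.IsPath → P.length ≤ Fintype.card V :=
    fun P hP => hP.length_lt.le
  have h1 : p 1 := by
    refine ⟨a, b, Walk.cons hab Walk.nil, ?_, ?_, rfl⟩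
    · simpa using hab.ne
    · intro v hv
      simp only [Walk.support_cons, Walk.support_nil, List.mem_cons, List.not_mem_nil,
        or_false] at hv
      rcases hv with rfl | rfl <;> assumption
  have hb1 : 1 ≤ Fintype.card V := Fintype.card_pos_iff.2 ⟨a⟩
  obtain ⟨x, y, P, hP, hPa, hPl⟩ := Nat.findGreatest_spec (P := p) hb1 h1
  refine ⟨x, y, P, ⟨hP, hPa, fun x' y' Q hQ hQa => ?_⟩, ?_⟩
  · rw [hPl]
    exact Nat.le_findGreatest (hbound Q hQ) ⟨_, _, Q, hQ, hQa, rfl⟩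
  · rw [hPl]
    exact Nat.le_findGreatest hb1 h1

end Assembly

theorem stmt_6 [Fintype V] [DecidableEq V] (G : SimpleGraph V) [DecidableRel G.Adj]
    (ht : OneTough G) (hδ : Fintype.card V ≤ 3 * G.minDegree + 2)
    (hbad : ∃ (u : V) (c : G.Walk u u), IsLongestCycle c ∧ ¬ IsDominating c) :
    Fintype.card V ≤ 3 * G.minDegree + 2 ∧
    ∃ (u x y : V) (c : G.Walk u u) (P : G.Walk x y),
      IsLongestCycle c ∧ IsLongestPathOutside c P ∧ 1 ≤ P.length ∧
      2 * G.minDegree + 2 ≤ c.length ∧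
      c.length + P.length ≤ 3 * G.minDegree + 1 := by
  refine ⟨hδ, ?_⟩
  obtain ⟨u, w, hw, hdom⟩ := hbad
  unfold IsDominating at hdom
  push Not at hdom
  obtain ⟨a, b, hab, ha, hb⟩ := hdom
  obtain ⟨x, y, P, hP, hP1⟩ := exists_longestPathOutside w hab ha hb
  refine ⟨u, x, y, w, P, hw, hP, hP1, long_of_not_dominating ht hw hab ha hb, ?_⟩
  -- the vertex sets of the cycle and of the path are disjoint
  obtain ⟨v, D, -, hDc, hDm⟩ := PS.of_cycle w hw.1 w.start_mem_support
  have hPc : P.support.toFinset.card = P.length + 1 := by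
    rw [List.toFinset_card_of_nodup hP.1.support_nodup, Walk.length_support]
  have hdis : Disjoint D P.support.toFinset := by
    rw [Finset.disjoint_left]
    intro z hz hz'
    exact hP.2.1 z (List.mem_toFinset.1 hz') ((hDm z).1 hz)
  have hle := card_le_univ (D ∪ P.support.toFinset)
  rw [card_union_of_disjoint hdis, hDc, hPc] at hle
  omega
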